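/- (Embedding theorem, Hamiltonian part) Let ε = sup_{(P,q)∈D} max(|∂_P S(P,q)|, |∂_q S(P,q)|) and suppose m = ⌊δ/(6eε) − d⌋ ≥ 1. Then there is a Hamiltonian vector field X̂_m = J∇H_m, with H_m analytic on D₁, such that ‖X̂_m − X_m‖_{D₁} ≤ 4 e^{d+1} ε · exp(−δ/(6eε)), ‖Φ_{X̂_m} − f‖_{D₀} ≤ 5 e^{d+1} ε · exp(−δ/(6eε)), ‖X̂_m‖_{D₁} ≤ 4ε, and ‖X̂_m − J∇S‖_{D₁} ≤ 17(d+3)² ε²/δ, where J is the standard symplectic matrix on ℂ^{2d}. -/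

import Mathlib

/-- Complex phase space `ℂ^d × ℂ^d ≅ ℂ^{2d}` with the sup norm. -/
abbrev CPhase (d : ℕ) := (Fin d → ℂ) × (Fin d → ℂ)

/-- Partial gradient `∂_P S` of `S` in the first block of `d` variables. -/
noncomputable def pGrad (d : ℕ) (S : CPhase d → ℂ) (x : CPhase d) : Fin d → ℂ :=
  fun i => fderiv ℂ S x (Pi.single i 1, 0)

/-- Partial gradient `∂_q S` of `S` in the second block of `d` variables. -/
noncomputable def qGrad (d : ℕ) (S : CPhase d → ℂ) (x : CPhase d) : Fin d → ℂ :=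
  fun i => fderiv ℂ S x (0, Pi.single i 1)

/-- The Hamiltonian vector field `J ∇H = (−∂_q H, ∂_p H)` of a Hamiltonian `H`. -/
noncomputable def hamVF (d : ℕ) (H : CPhase d → ℂ) (x : CPhase d) : CPhase d :=
  (-(qGrad d H x), pGrad d H x)

/-- Newton finite differences of a map `f`: `Δ₀(x) = x`,
`Δ_k(x) = Δ_{k−1}(f(x)) − Δ_{k−1}(x)`. -/
def finDiff {α : Type*} [AddCommGroup α] (f : α → α) : ℕ → α → α
  | 0, x => x
  | k + 1, x => finDiff f k (f x) - finDiff f k x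

/-- The interpolating vector field of order `m`:
`X_m(x) = Σ_{k=1}^m ((−1)^{k−1}/k) Δ_k(x)`. -/
noncomputable def interpVF (d : ℕ) (f : CPhase d → CPhase d) (m : ℕ) (x : CPhase d) :
    CPhase d :=
  ∑ k ∈ Finset.Icc 1 m, ((-1 : ℂ) ^ (k - 1) / k) • finDiff f k x


set_option linter.unusedSectionVars false
set_option linter.unusedSimpArgs false

section

open Filter Topology Asymptotics

namespace Emb

/-- Taylor coefficient of order `j` at `0`. -/
noncomputable def tc {E : Type*} [NormedAddCommGroup E] [NormedSpace ℂ E] (j : ℕ) (g : ℂ → E) : E :=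
  ((j.factorial : ℂ)⁻¹) • iteratedDeriv j g 0

section oneD
variable {E : Type*} [NormedAddCommGroup E] [NormedSpace ℂ E] [CompleteSpace E]

theorem norm_tc_le {g : ℂ → E} {R M : ℝ} (hR : 0 < R)
    (hg : ∀ z, ‖z‖ ≤ R → DifferentiableAt ℂ g z) (hM : ∀ z, ‖z‖ ≤ R → ‖g z‖ ≤ M) (j : ℕ) :
    ‖tc j g‖ ≤ M / R ^ j := by
  have h := Complex.norm_iteratedDeriv_le_of_forall_mem_sphere_norm_le (c := 0) (f := g) (C := M) j hR
    (by
      refine DifferentiableOn.diffContOnCl ?_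
      intro z hz
      have hz' := Metric.closure_ball_subset_closedBall hz
      exact (hg z (by simpa using hz')).differentiableWithinAt)
    (fun z hz => hM z (by simp at hz; exact hz.le))
  unfold tc
  rw [norm_smul, norm_inv, Complex.norm_natCast]
  have hf : (0:ℝ) < j.factorial := by positivity
  rw [inv_mul_le_iff₀ hf]
  calc _ ≤ _ := h
    _ = _ := by ring

theorem norm_sub_tc_le {g : ℂ → E} {R M : ℝ} (hR : 1 < R)
    (hg : ∀ z, ‖z‖ ≤ R → DifferentiableAt ℂ g z) (hM : ∀ z, ‖z‖ ≤ R → ‖g z‖ ≤ M) (m : ℕ) :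
    ‖g 1 - ∑ j ∈ Finset.range m, tc j g‖ ≤ M / R ^ m / (1 - 1 / R) := by
  have h := Complex.hasSum_taylorSeries_on_ball (f := g) (c := 0) (r := R) (z := 1)
    (fun z hz => (hg z (by simp at hz; exact hz.le)).differentiableWithinAt) (by simpa using hR)
  have h2 : HasSum (fun n => tc n g) (g 1) := by
    refine h.congr_fun ?_ |> fun h => h
    intro n; simp [tc]
  have h3 := (hasSum_nat_add_iff' m).mpr h2
  have hR0 : 0 < R := by linarith
  have h4 : HasSum (fun n => M / R ^ m * (1 / R) ^ n) (M / R ^ m * (1 - 1 / R)⁻¹) :=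
    (hasSum_geometric_of_lt_one (by positivity) (by rw [div_lt_one hR0]; exact hR)).mul_left _
  rw [← h3.tsum_eq, div_eq_mul_inv (M / R ^ m)]
  refine tsum_of_norm_bounded h4 ?_
  intro n
  refine (norm_tc_le hR0 hg hM _).trans (le_of_eq ?_)
  rw [pow_add, one_div, inv_pow]; field_simp

theorem tc_eq_zero {g : ℂ → E} (hg : AnalyticAt ℂ g 0) {n : ℕ}
    (hO : g =O[𝓝 0] (fun μ : ℂ => μ ^ n)) {j : ℕ} (hj : j < n) : tc j g = 0 := by
  have : iteratedDeriv j g 0 = 0 := by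
    refine (natCast_le_analyticOrderAt_iff_iteratedDeriv_eq_zero hg (n := n)).1 ?_ j hj
    by_contra hlt
    push Not at hlt
    have hne : analyticOrderAt g 0 ≠ ⊤ := ne_top_of_lt hlt
    obtain ⟨k, hk⟩ := ENat.ne_top_iff_exists.1 hne
    rw [← hk] at hlt
    have hkn : k < n := by exact_mod_cast hlt
    obtain ⟨u, hu, hu0, hug⟩ := (hg.analyticOrderAt_eq_natCast (n := k)).1 hk.symm
    have h1 : u =O[𝓝[≠] 0] (fun μ : ℂ => μ ^ (n - k)) := by
      obtain ⟨C, hC⟩ := hO.bound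
      refine IsBigO.of_bound C ?_
      have hC' := hC.filter_mono (nhdsWithin_le_nhds (s := {0}ᶜ))
      have hug' := hug.filter_mono (nhdsWithin_le_nhds (s := {0}ᶜ))
      filter_upwards [hC', hug', self_mem_nhdsWithin] with z h1 h2 h3
      have h3 : z ≠ 0 := h3
      rw [h2] at h1
      simp only [sub_zero, norm_smul, norm_pow] at h1 ⊢
      have hz : 0 < ‖z‖ ^ k := by positivity
      have : ‖z‖ ^ n = ‖z‖ ^ k * ‖z‖ ^ (n - k) := by rw [← pow_add]; congr 1; omega
      rw [this] at h1
      have h5 : ‖z‖ ^ k * ‖u z‖ ≤ ‖z‖ ^ k * (C * ‖z‖ ^ (n - k)) := by linarith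
      exact le_of_mul_le_mul_left h5 hz
    have h2 : Tendsto u (𝓝[≠] 0) (𝓝 0) := by
      refine h1.trans_tendsto ?_
      have : Tendsto (fun μ : ℂ => μ ^ (n - k)) (𝓝 0) (𝓝 (0 ^ (n - k))) :=
        (continuous_pow _).tendsto 0
      rw [zero_pow (by omega)] at this
      exact this.mono_left nhdsWithin_le_nhds
    have h3 : Tendsto u (𝓝[≠] 0) (𝓝 (u 0)) := hu.continuousAt.tendsto.mono_left nhdsWithin_le_nhds
    exact hu0 (tendsto_nhds_unique h3 h2)
  simp [tc, this]

/-- linear maps commute with Taylor coefficients -/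
theorem tc_clm {F : Type*} [NormedAddCommGroup F] [NormedSpace ℂ F] (L : E →L[ℂ] F) {g : ℂ → E}
    (hg : AnalyticAt ℂ g 0) (j : ℕ) : tc j (fun z => L (g z)) = L (tc j g) := by
  have : ∀ (g : ℂ → E), AnalyticAt ℂ g 0 →
      iteratedDeriv j (fun z => L (g z)) 0 = L (iteratedDeriv j g 0) := by
    induction j with
    | zero => intro g hg; simp
    | succ j ih =>
      intro g hg
      rw [iteratedDeriv_succ', iteratedDeriv_succ', ← ih _ hg.deriv]
      apply Filter.EventuallyEq.iteratedDeriv_eq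
      filter_upwards [hg.eventually_analyticAt] with z hz
      exact (L.hasFDerivAt.comp_hasDerivAt z hz.differentiableAt.hasDerivAt).deriv
  simp [tc, this g hg]

theorem tc_congr {g g' : ℂ → E} (h : g =ᶠ[𝓝 0] g') (j : ℕ) : tc j g = tc j g' := by
  simp [tc, h.iteratedDeriv_eq]

theorem tc_add {g g' : ℂ → E} (hg : AnalyticAt ℂ g 0) (hg' : AnalyticAt ℂ g' 0) (j : ℕ) :
    tc j (fun z => g z + g' z) = tc j g + tc j g' := by
  unfold tc
  rw [iteratedDeriv_fun_add (hg.contDiffAt) (hg'.contDiffAt), smul_add]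

theorem tc_sub {g g' : ℂ → E} (hg : AnalyticAt ℂ g 0) (hg' : AnalyticAt ℂ g' 0) (j : ℕ) :
    tc j (fun z => g z - g' z) = tc j g - tc j g' := by
  unfold tc
  rw [iteratedDeriv_fun_sub (hg.contDiffAt) (hg'.contDiffAt), smul_sub]

theorem tc_eq_of_isBigO {g g' : ℂ → E} (hg : AnalyticAt ℂ g 0) (hg' : AnalyticAt ℂ g' 0) {n : ℕ}
    (hO : (fun z => g z - g' z) =O[𝓝 0] (fun μ : ℂ => μ ^ n)) {j : ℕ} (hj : j < n) :
    tc j g = tc j g' := by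
  rw [← sub_eq_zero, ← tc_sub hg hg']
  exact tc_eq_zero (hg.fun_sub hg') hO hj

end oneD

section lip
variable {E F : Type*} [NormedAddCommGroup E] [NormedSpace ℂ E] [NormedAddCommGroup F]
  [NormedSpace ℂ F]

theorem cauchy_fderiv {φ : E → F} {z : E} {ρ M : ℝ} (hρ : 0 < ρ)
    (hd : ∀ w, ‖w - z‖ ≤ ρ → DifferentiableAt ℂ φ w)
    (hM : ∀ w, ‖w - z‖ ≤ ρ → ‖φ w‖ ≤ M) : ‖fderiv ℂ φ z‖ ≤ M / ρ := by
  have hM0 : 0 ≤ M := (norm_nonneg _).trans (hM z (by simpa using hρ.le))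
  refine ContinuousLinearMap.opNorm_le_bound _ (by positivity) ?_
  intro v
  by_cases hv : v = 0
  · simp [hv]
  have hv' : 0 < ‖v‖ := norm_pos_iff.2 hv
  have key : ∀ s : ℂ, ‖s‖ ≤ ρ / ‖v‖ → ‖z + s • v - z‖ ≤ ρ := by
    intro s hs
    rw [add_sub_cancel_left, norm_smul]
    rwa [le_div_iff₀ hv'] at hs
  have hda : ∀ s : ℂ, HasDerivAt (fun s : ℂ => z + s • v) v s := by
    intro s
    simpa using ((hasDerivAt_id s).smul_const v).const_add z
  have h := Complex.norm_deriv_le_of_forall_mem_sphere_norm_le (c := 0)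
    (f := fun s : ℂ => φ (z + s • v)) (C := M) (R := ρ / ‖v‖) (by positivity)
    (by
      refine DifferentiableOn.diffContOnCl ?_
      intro s hs
      have hs' := Metric.closure_ball_subset_closedBall hs
      simp only [mem_closedBall_zero_iff] at hs'
      exact ((hd _ (key s hs')).comp s (hda s).differentiableAt).differentiableWithinAt)
    (fun s hs => hM _ (key s (by simp at hs; exact hs.le)))
  have h2 : deriv (fun s : ℂ => φ (z + s • v)) 0 = fderiv ℂ φ z v := by
    have h3 : HasFDerivAt φ (fderiv ℂ φ z) (z + (0:ℂ) • v) := by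
      simpa using (hd z (by simpa using hρ.le)).hasFDerivAt
    exact (h3.comp_hasDerivAt (0:ℂ) (hda 0)).deriv
  rw [h2] at h
  calc _ ≤ _ := h
    _ = _ := by field_simp

theorem cauchy_lip {φ : E → F} {y : E} {r ρ M : ℝ} (hρ : 0 < ρ)
    (hd : ∀ w, ‖w - y‖ ≤ r + ρ → DifferentiableAt ℂ φ w)
    (hM : ∀ w, ‖w - y‖ ≤ r + ρ → ‖φ w‖ ≤ M) {a b : E} (ha : ‖a - y‖ ≤ r) (hb : ‖b - y‖ ≤ r) :
    ‖φ b - φ a‖ ≤ M / ρ * ‖b - a‖ := by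
  let _ : NormedSpace ℝ E := NormedSpace.restrictScalars ℝ ℂ E
  have hz : ∀ z ∈ Metric.closedBall y r, ∀ w, ‖w - z‖ ≤ ρ → ‖w - y‖ ≤ r + ρ := by
    intro z hz w hw
    rw [mem_closedBall_iff_norm] at hz
    calc ‖w - y‖ = ‖(w - z) + (z - y)‖ := by congr 1; abel
      _ ≤ _ := norm_add_le _ _
      _ ≤ _ := by linarith
  refine Convex.norm_image_sub_le_of_norm_fderiv_le (𝕜 := ℂ) (s := Metric.closedBall y r) ?_ ?_
    (convex_closedBall y r) (mem_closedBall_iff_norm.2 ha)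
    (mem_closedBall_iff_norm.2 hb)
  · intro z hz'
    exact hd z (hz z hz' z (by simpa using hρ.le))
  · intro z hz'
    exact cauchy_fderiv hρ (fun w hw => hd w (hz z hz' w hw)) (fun w hw => hM w (hz z hz' w hw))

end lip
end Emb
end

section

open Filter Topology Asymptotics

namespace Emb

/-- binomial polynomial `X choose k` -/
noncomputable def bp : ℕ → Polynomial ℂ
  | 0 => 1
  | k + 1 => bp k * (Polynomial.C ((k + 1 : ℂ)⁻¹) * (Polynomial.X - Polynomial.C (k : ℂ)))

theorem bp_natDegree (k : ℕ) : (bp k).natDegree ≤ k := by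
  induction k with
  | zero => simp [bp]
  | succ k ih =>
    rw [bp]
    refine Polynomial.natDegree_mul_le.trans ?_
    refine Nat.add_le_add ih ?_
    refine (Polynomial.natDegree_C_mul_le _ _).trans ?_
    exact Polynomial.natDegree_X_sub_C_le _

theorem bp_eval_nat (n k : ℕ) : (bp k).eval (n : ℂ) = (n.choose k : ℂ) := by
  induction k with
  | zero => simp [bp]
  | succ k ih =>
    have hk : ((k : ℂ) + 1) ≠ 0 := by exact_mod_cast Nat.succ_ne_zero k
    rw [bp]
    simp only [Polynomial.eval_mul, Polynomial.eval_C, Polynomial.eval_sub, Polynomial.eval_X, ih]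
    by_cases h : k ≤ n
    · have := Nat.choose_succ_right_eq n k
      have h2 : ((n.choose (k + 1) : ℕ) : ℂ) * ((k : ℂ) + 1) = (n.choose k : ℂ) * ((n : ℂ) - k) := by
        rw [← Nat.cast_sub h]; exact_mod_cast this
      field_simp
      linear_combination -h2
    · push Not at h
      rw [Nat.choose_eq_zero_of_lt h, Nat.choose_eq_zero_of_lt (by omega)]
      simp

theorem bp_eval_zero (k : ℕ) : (bp k).eval 0 = if k = 0 then 1 else 0 := by
  have := bp_eval_nat 0 k
  simp only [Nat.cast_zero] at this
  rw [this]
  rcases k with _ | k <;> simp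

theorem bp_deriv_zero (k : ℕ) :
    (bp (k + 1)).derivative.eval 0 = (-1 : ℂ) ^ k / ((k + 1 : ℕ) : ℂ) := by
  induction k with
  | zero => simp [bp]
  | succ k ih =>
    rw [bp]
    simp only [Polynomial.derivative_mul, Polynomial.eval_add, Polynomial.eval_mul, ih]
    rw [bp_eval_zero]
    have hk : ((k : ℂ) + 1) ≠ 0 := by exact_mod_cast Nat.succ_ne_zero k
    have hk : ((k : ℂ) + 1 + 1) ≠ 0 := by exact_mod_cast Nat.succ_ne_zero (k+1)
    simp
    field_simp
    ring

theorem bp_deriv_zero' (k : ℕ) (hk : 1 ≤ k) :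
    (bp k).derivative.eval 0 = (-1 : ℂ) ^ (k - 1) / (k : ℂ) := by
  obtain ⟨k, rfl⟩ := Nat.exists_eq_add_of_le' hk
  exact bp_deriv_zero k

/-- bounds on `[0,1]` -/
theorem bp_bounds (k : ℕ) (t : ℝ) (h0 : 0 ≤ t) (h1 : t ≤ 1) :
    ‖(bp (k + 1)).eval (t : ℂ)‖ ≤ t / (k + 1) ∧
      ‖(bp (k + 1)).derivative.eval (t : ℂ)‖ ≤ 1 / (k + 1) := by
  induction k with
  | zero => simp [bp, abs_of_nonneg h0]
  | succ k ih =>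
    obtain ⟨i1, i2⟩ := ih
    have hk : (0:ℝ) < (k : ℝ) + 1 := by positivity
    have hk2 : (0:ℝ) < (k : ℝ) + 1 + 1 := by positivity
    have e1 : ‖((k + 1 : ℕ) + 1 : ℂ)⁻¹‖ = 1 / ((k : ℝ) + 1 + 1) := by
      rw [norm_inv, one_div]
      congr 1
      have : (((k + 1 : ℕ) : ℂ) + 1) = ((k + 2 : ℕ) : ℂ) := by push_cast; ring
      rw [this, Complex.norm_natCast]; push_cast; ring
    have e2 : ‖(t : ℂ) - ((k + 1 : ℕ) : ℂ)‖ = (k : ℝ) + 1 - t := by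
      have : (t : ℂ) - ((k + 1 : ℕ) : ℂ) = ((t - ((k : ℝ) + 1) : ℝ) : ℂ) := by push_cast; ring
      rw [this, Complex.norm_real, Real.norm_eq_abs, abs_of_nonpos (by linarith [Nat.cast_nonneg (α := ℝ) k])]
      ring
    have hkt : 0 ≤ (k : ℝ) + 1 - t := by linarith [Nat.cast_nonneg (α := ℝ) k]
    constructor
    · rw [bp]
      simp only [Polynomial.eval_mul, Polynomial.eval_C, Polynomial.eval_sub, Polynomial.eval_X, norm_mul, e1, e2]
      calc _ ≤ t / (k + 1) * (1 / ((k : ℝ) + 1 + 1) * ((k : ℝ) + 1)) := by gcongr; linarith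
        _ = _ := by push_cast; field_simp
    · rw [bp]
      simp only [Polynomial.derivative_mul, Polynomial.eval_add, Polynomial.eval_mul, Polynomial.eval_C,
        Polynomial.eval_sub, Polynomial.eval_X, Polynomial.derivative_C, Polynomial.derivative_sub,
        Polynomial.derivative_X, Polynomial.eval_zero, zero_mul, zero_add, sub_zero, Polynomial.eval_one, mul_one]
      refine (norm_add_le _ _).trans ?_
      simp only [norm_mul, e1, e2]
      calc _ ≤ 1 / ((k : ℝ) + 1) * (1 / ((k : ℝ) + 1 + 1) * ((k : ℝ) + 1 - t)) +
            t / ((k : ℝ) + 1) * (1 / ((k : ℝ) + 1 + 1)) := by gcongr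
        _ = _ := by push_cast; field_simp; ring

/-- polynomial lemma -/
theorem poly_isBigO {l : Filter ℂ} {φ : ℂ → ℂ} (U : ℂ → Polynomial ℂ) (N : ℕ)
    (hdeg : ∀ μ, (U μ).natDegree ≤ N)
    (hU : ∀ n : ℕ, (fun μ => (U μ).eval (n : ℂ)) =O[l] φ) (t : ℂ) :
    (fun μ => (U μ).eval t) =O[l] φ ∧ (fun μ => (U μ).derivative.eval t) =O[l] φ := by
  have hi : ∀ μ, U μ = ∑ n ∈ Finset.range (N + 1),
      Polynomial.C ((U μ).eval (n : ℂ)) * Lagrange.basis (Finset.range (N + 1)) (fun n : ℕ => (n : ℂ)) n := by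
    intro μ
    have := Lagrange.eq_interpolate (s := Finset.range (N + 1)) (v := fun n : ℕ => (n : ℂ)) (f := U μ)
      (fun a _ b _ h => by simpa using h)
      (by
        rw [Finset.card_range]
        exact (Polynomial.degree_le_natDegree).trans_lt (by exact_mod_cast Nat.lt_succ_of_le (hdeg μ)))
    conv_lhs => rw [this]
    rw [Lagrange.interpolate_apply]
  constructor
  · have : (fun μ => (U μ).eval t) = fun μ => ∑ n ∈ Finset.range (N + 1),
        (Lagrange.basis (Finset.range (N + 1)) (fun n : ℕ => (n : ℂ)) n).eval t * (U μ).eval (n : ℂ) := by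
      ext μ
      conv_lhs => rw [hi μ]
      simp [Polynomial.eval_finsetSum, mul_comm]
    rw [this]
    exact IsBigO.fun_sum fun n _ => (hU n).const_mul_left _
  · have : (fun μ => (U μ).derivative.eval t) = fun μ => ∑ n ∈ Finset.range (N + 1),
        (Lagrange.basis (Finset.range (N + 1)) (fun n : ℕ => (n : ℂ)) n).derivative.eval t * (U μ).eval (n : ℂ) := by
      ext μ
      conv_lhs => rw [hi μ]
      simp [Polynomial.eval_finsetSum, Polynomial.derivative_sum, mul_comm]
    rw [this]
    exact IsBigO.fun_sum fun n _ => (hU n).const_mul_left _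

/-- Newton interpolation polynomial -/
noncomputable def nwt (m : ℕ) (a : ℕ → ℂ) : Polynomial ℂ :=
  ∑ k ∈ Finset.range (m + 1), Polynomial.C (a k) * bp k

/-- the truncated logarithm functional -/
noncomputable def lg {W : Type*} [AddCommGroup W] [Module ℂ W] (m : ℕ) (a : ℕ → W) : W :=
  ∑ k ∈ Finset.Icc 1 m, ((-1 : ℂ) ^ (k - 1) / (k : ℂ)) • a k

theorem nwt_natDegree (m : ℕ) (a : ℕ → ℂ) : (nwt m a).natDegree ≤ m := by
  refine Polynomial.natDegree_sum_le_of_forall_le _ _ ?_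
  intro k hk
  refine (Polynomial.natDegree_C_mul_le _ _).trans ((bp_natDegree k).trans ?_)
  simp at hk; omega

theorem nwt_eval (m : ℕ) (a : ℕ → ℂ) (t : ℂ) :
    (nwt m a).eval t = ∑ k ∈ Finset.range (m + 1), a k * (bp k).eval t := by
  simp [nwt, Polynomial.eval_finsetSum]

theorem nwt_deriv_eval (m : ℕ) (a : ℕ → ℂ) (t : ℂ) :
    (nwt m a).derivative.eval t = ∑ k ∈ Finset.range (m + 1), a k * (bp k).derivative.eval t := by
  simp [nwt, Polynomial.eval_finsetSum, Polynomial.derivative_sum]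

theorem range_eq_Icc {W : Type*} [AddCommMonoid W] (m : ℕ) (u : ℕ → W) (h0 : u 0 = 0) :
    ∑ k ∈ Finset.range (m + 1), u k = ∑ k ∈ Finset.Icc 1 m, u k := by
  rw [Finset.sum_range_succ', h0, add_zero, Finset.range_eq_Ico, Finset.sum_Ico_add' u 0 m 1]
  rfl

theorem nwt_zero (m : ℕ) (a : ℕ → ℂ) : (nwt m a).eval 0 = a 0 := by
  rw [nwt_eval, Finset.sum_eq_single 0]
  · simp [bp_eval_zero]
  · intro b _ hb; simp [bp_eval_zero, hb]
  · simp

theorem nwt_deriv_zero (m : ℕ) (a : ℕ → ℂ) : (nwt m a).derivative.eval 0 = lg m a := by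
  rw [nwt_deriv_eval, range_eq_Icc _ _ (by simp [bp]), lg]
  refine Finset.sum_congr rfl fun k hk => ?_
  rw [bp_deriv_zero' k (Finset.mem_Icc.1 hk).1, smul_eq_mul, mul_comm]

/-- Newton sum -/
noncomputable def ns {W : Type*} [AddCommGroup W] [Module ℂ W] (n : ℕ) (a : ℕ → W) : W :=
  ∑ k ∈ Finset.range (n + 1), (n.choose k : ℂ) • a k

theorem pow_isBigO {a b : ℕ} (h : b ≤ a) : (fun μ : ℂ => μ ^ a) =O[𝓝 0] (fun μ : ℂ => μ ^ b) := by
  refine IsBigO.of_bound 1 ?_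
  filter_upwards [Metric.ball_mem_nhds (0 : ℂ) one_pos] with z hz
  rw [norm_pow, norm_pow, one_mul]
  exact pow_le_pow_of_le_one (norm_nonneg _) (by simpa using (mem_ball_zero_iff.1 hz).le) h

theorem nwt_sub_ns {a : ℕ → ℂ → ℂ} (ha : ∀ k, a k =O[𝓝 0] (fun μ : ℂ => μ ^ k)) (m n : ℕ) :
    (fun μ => (nwt m (fun k => a k μ)).eval (n : ℂ) - ns n (fun k => a k μ)) =O[𝓝 0]
      (fun μ : ℂ => μ ^ (m + 1)) := by
  have h : ∀ N, (fun μ => ∑ k ∈ Finset.range (m + 1 + N), (n.choose k : ℂ) * a k μ -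
      ∑ k ∈ Finset.range (m + 1), (n.choose k : ℂ) * a k μ) =O[𝓝 0] (fun μ : ℂ => μ ^ (m + 1)) := by
    intro N
    simp only [Finset.sum_range_add, add_sub_cancel_left]
    exact IsBigO.fun_sum fun k _ => ((ha _).const_mul_left _).trans (pow_isBigO (by omega))
  have h1 := h n
  have h2 : ∀ μ, ns n (fun k => a k μ) =
      ∑ k ∈ Finset.range (m + 1 + n), (n.choose k : ℂ) * a k μ := by
    intro μ
    rw [ns, show m + 1 + n = (n + 1) + m by ring, Finset.sum_range_add _ (n + 1) m]
    simp only [smul_eq_mul]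
    rw [left_eq_add]
    refine Finset.sum_eq_zero fun k _ => ?_
    rw [Nat.choose_eq_zero_of_lt (by omega)]; simp
  refine h1.neg_left.congr_left ?_
  intro μ
  rw [h2, nwt_eval]
  simp only [bp_eval_nat]
  rw [neg_sub]
  congr 1
  exact Finset.sum_congr rfl fun k _ => mul_comm _ _

theorem isBigO_one_of_pow {a : ℂ → ℂ} {k : ℕ} (h : a =O[𝓝 0] (fun μ : ℂ => μ ^ k)) :
    a =O[𝓝 0] (fun _ : ℂ => (1 : ℂ)) := by
  refine h.trans ((pow_isBigO (Nat.zero_le k)).congr_right ?_); simp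

theorem ns_bdd {a : ℕ → ℂ → ℂ} (ha : ∀ k, a k =O[𝓝 0] (fun μ : ℂ => μ ^ k)) (n : ℕ) :
    (fun μ => ns n (fun k => a k μ)) =O[𝓝 0] (fun _ : ℂ => (1 : ℂ)) := by
  simp only [ns, smul_eq_mul]
  exact IsBigO.fun_sum fun k _ => (isBigO_one_of_pow (ha k)).const_mul_left _

theorem nwt_bdd {a : ℕ → ℂ → ℂ} (ha : ∀ k, a k =O[𝓝 0] (fun μ : ℂ => μ ^ k)) (m : ℕ) (t : ℂ) :
    (fun μ => (nwt m (fun k => a k μ)).eval t) =O[𝓝 0] (fun _ : ℂ => (1 : ℂ)) := by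
  simp only [nwt_eval]
  refine IsBigO.fun_sum fun k _ => ?_
  simp only [mul_comm _ ((bp k).eval t)]
  exact (isBigO_one_of_pow (ha k)).const_mul_left _

/-- Leibniz rule for the truncated logarithm -/
theorem leibniz {ι : Type*} [Fintype ι] {p w : ι → ℕ → ℂ → ℂ} {B : ℕ → ℂ → ℂ} (m : ℕ)
    (hp : ∀ i k, p i k =O[𝓝 0] (fun μ : ℂ => μ ^ k))
    (hw : ∀ i k, w i k =O[𝓝 0] (fun μ : ℂ => μ ^ k))
    (hB : ∀ k, B k =O[𝓝 0] (fun μ : ℂ => μ ^ k))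
    (h : ∀ n : ℕ, ∀ᶠ μ in 𝓝 (0 : ℂ),
      ∑ i, ns n (fun k => p i k μ) * ns n (fun k => w i k μ) = ns n (fun k => B k μ)) :
    (fun μ => ∑ i, (lg m (fun k => p i k μ) * w i 0 μ + p i 0 μ * lg m (fun k => w i k μ)) -
      lg m (fun k => B k μ)) =O[𝓝 0] (fun μ : ℂ => μ ^ (m + 1)) := by
  let U : ℂ → Polynomial ℂ := fun μ =>
    ∑ i, nwt m (fun k => p i k μ) * nwt m (fun k => w i k μ) - nwt m (fun k => B k μ)
  have hdeg : ∀ μ, (U μ).natDegree ≤ m + m := by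
    intro μ
    refine (Polynomial.natDegree_sub_le _ _).trans (max_le ?_ ((nwt_natDegree _ _).trans (by omega)))
    refine Polynomial.natDegree_sum_le_of_forall_le _ _ fun i _ => ?_
    exact Polynomial.natDegree_mul_le.trans (Nat.add_le_add (nwt_natDegree _ _) (nwt_natDegree _ _))
  have hU : ∀ n : ℕ, (fun μ => (U μ).eval (n : ℂ)) =O[𝓝 0] (fun μ : ℂ => μ ^ (m + 1)) := by
    intro n
    have key : (fun μ => (∑ i,
        (((nwt m (fun k => p i k μ)).eval (n : ℂ) - ns n (fun k => p i k μ)) *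
            (nwt m (fun k => w i k μ)).eval (n : ℂ) +
          ns n (fun k => p i k μ) *
            ((nwt m (fun k => w i k μ)).eval (n : ℂ) - ns n (fun k => w i k μ)))) -
        ((nwt m (fun k => B k μ)).eval (n : ℂ) - ns n (fun k => B k μ)))
          =O[𝓝 0] (fun μ : ℂ => μ ^ (m + 1)) := by
      refine IsBigO.sub (IsBigO.fun_sum fun i _ => IsBigO.add ?_ ?_) (nwt_sub_ns hB m n)
      · exact ((nwt_sub_ns (hp i) m n).mul (nwt_bdd (hw i) m n)).congr_right (by simp)
      · exact ((ns_bdd (hp i) n).mul (nwt_sub_ns (hw i) m n)).congr_right (by simp)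
    refine key.congr' ?_ EventuallyEq.rfl
    filter_upwards [h n] with μ hμ
    simp only [U, Polynomial.eval_sub, Polynomial.eval_finsetSum, Polynomial.eval_mul]
    rw [← hμ, sub_sub_eq_add_sub, ← Finset.sum_add_distrib]
    congr 1
    refine Finset.sum_congr rfl fun i _ => ?_
    ring
  have := (poly_isBigO U _ hdeg hU 0).2
  refine this.congr_left ?_
  intro μ
  simp only [U, Polynomial.derivative_sub, Polynomial.derivative_sum, Polynomial.derivative_mul,
    Polynomial.eval_sub, Polynomial.eval_finsetSum, Polynomial.eval_add, Polynomial.eval_mul,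
    nwt_zero, nwt_deriv_zero]

end Emb
end

section

open Filter Topology Asymptotics

namespace Emb

section abs
variable {E : Type*} [NormedAddCommGroup E] [NormedSpace ℂ E]
variable {W : Type*} [NormedAddCommGroup W] [NormedSpace ℂ W] [CompleteSpace W]

/-- one step -/
def stp (F : ℂ × E → E) (p : ℂ × E) : ℂ × E := (p.1, F p)

/-- differences of observables along the family -/
def dl (F : ℂ × E → E) (g : ℂ × E → W) : ℕ → ℂ × E → W
  | 0 => g
  | k + 1 => fun p => dl F g k (stp F p) - dl F g k p

theorem ns_succ (n : ℕ) (a : ℕ → W) : ns (n + 1) a = ns n a + ns n (fun k => a (k + 1)) := by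
  simp only [ns]
  rw [Finset.sum_range_succ', Finset.sum_range_succ]
  simp only [Nat.choose_succ_succ, Nat.cast_add, add_smul, Finset.sum_add_distrib, Nat.choose_zero_right]
  rw [Finset.sum_range_succ' (fun k => ((n.choose k : ℕ) : ℂ) • a k), Nat.choose_succ_self]
  simp only [Nat.choose_zero_right, Finset.sum_range_succ, Nat.choose_self, Nat.choose_succ_self]
  simp
  abel

theorem ns_add (n : ℕ) (a b : ℕ → W) : ns n (fun k => a k + b k) = ns n a + ns n b := by
  simp [ns, Finset.sum_add_distrib]

theorem newton (F : ℂ × E → E) (g : ℂ × E → W) (n : ℕ) (p : ℂ × E) :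
    g ((stp F)^[n] p) = ns n (fun k => dl F g k p) := by
  induction n generalizing p with
  | zero => simp [ns, dl]
  | succ n ih =>
    rw [Function.iterate_succ_apply, ih, ns_succ, ← ns_add]
    congr 1; ext k; simp [dl]

/-- shifted sequence -/
def sh (a : ℕ → W) : ℕ → W
  | 0 => 0
  | k + 1 => a k

theorem sum_ns (a : ℕ → W) (n : ℕ) : ∑ j ∈ Finset.range n, ns j a = ns n (sh a) := by
  induction n with
  | zero => simp [ns, sh]
  | succ n ih => rw [Finset.sum_range_succ, ih, ns_succ]; rfl

theorem stp_analytic {F : ℂ × E → E} {p : ℂ × E} (hF : AnalyticAt ℂ F p) :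
    AnalyticAt ℂ (stp F) p := analyticAt_fst.prod hF

theorem dl_analytic {F : ℂ × E → E} {x : E} (hF : AnalyticAt ℂ F (0, x)) (h0 : F (0, x) = x)
    {g : ℂ × E → W} (hg : AnalyticAt ℂ g (0, x)) (k : ℕ) : AnalyticAt ℂ (dl F g k) (0, x) := by
  induction k with
  | zero => exact hg
  | succ k ih =>
    refine AnalyticAt.sub ?_ ih
    refine AnalyticAt.fun_comp ?_ (stp_analytic hF)
    simpa [stp, h0] using ih

theorem iter_analytic {F : ℂ × E → E} {x : E} (hF : AnalyticAt ℂ F (0, x)) (h0 : F (0, x) = x)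
    (n : ℕ) : AnalyticAt ℂ ((stp F)^[n]) (0, x) ∧ (stp F)^[n] (0, x) = (0, x) := by
  induction n with
  | zero => exact ⟨analyticAt_id, rfl⟩
  | succ n ih =>
    constructor
    · rw [Function.iterate_succ]
      refine AnalyticAt.comp ?_ (stp_analytic hF)
      simpa [stp, h0] using ih.1
    · rw [Function.iterate_succ_apply]
      simpa [stp, h0] using ih.2

theorem isBigO_fst {G : ℂ × E → W} {x : E} (hG : AnalyticAt ℂ G (0, x))
    (h0 : ∀ᶠ y in 𝓝 x, G (0, y) = 0) : G =O[𝓝 (0, x)] (fun p : ℂ × E => p.1) := by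
  have h := hG.hasStrictFDerivAt.isBigO_sub
  have ht : Tendsto (fun p : ℂ × E => (p, ((0 : ℂ), p.2))) (𝓝 (0, x)) (𝓝 ((0, x), (0, x))) := by
    have : Continuous (fun p : ℂ × E => (p, ((0 : ℂ), p.2))) := by fun_prop
    exact this.tendsto' _ _ rfl
  have h2 := h.comp_tendsto ht
  have h3 : ∀ᶠ p : ℂ × E in 𝓝 (0, x), G (0, p.2) = 0 :=
    (continuous_snd.tendsto' ((0 : ℂ), x) x rfl).eventually h0
  refine (h2.congr' (f₂ := G) (g₂ := fun p : ℂ × E => (p.1, (0 : E))) ?_ ?_).trans ?_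
  · filter_upwards [h3] with p hp
    simp [hp]
  · refine Eventually.of_forall fun p => ?_
    ext <;> simp
  · refine IsBigO.of_bound 1 (Eventually.of_forall fun p => ?_)
    simp [Prod.norm_def]

theorem fst_le_one (x : E) (a b : ℕ) (h : b ≤ a) :
    (fun p : ℂ × E => p.1 ^ a) =O[𝓝 (0, x)] (fun p : ℂ × E => p.1 ^ b) :=
  (pow_isBigO h).comp_tendsto (continuous_fst.tendsto' ((0 : ℂ), x) 0 rfl)

/-- local bounds -/
theorem loc_bound {G : ℂ × E → W} {x : E} (hG : AnalyticAt ℂ G (0, x)) {j : ℕ}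
    (hO : G =O[𝓝 (0, x)] (fun p : ℂ × E => p.1 ^ j)) :
    ∃ C > 0, ∃ r > 0, ∀ μ : ℂ, ∀ y : E, ‖μ‖ < r → ‖y - x‖ < r →
      DifferentiableAt ℂ (fun y => G (μ, y)) y ∧ ‖G (μ, y)‖ ≤ C * ‖μ‖ ^ j := by
  obtain ⟨C, hC, hb⟩ := hO.exists_pos
  obtain ⟨r, hr, h⟩ := Metric.eventually_nhds_iff.1 (hG.eventually_analyticAt.and hb.bound)
  refine ⟨C, hC, r, hr, fun μ y hμ hy => ?_⟩
  have : dist (μ, y) ((0 : ℂ), x) < r := by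
    rw [Prod.dist_eq]; simp only [dist_eq_norm, sub_zero]; exact max_lt hμ hy
  obtain ⟨h1, h2⟩ := h this
  refine ⟨?_, by simpa using h2⟩
  have := h1.differentiableAt
  fun_prop

theorem comp_sub_order {F : ℂ × E → E} {x : E} (hF : AnalyticAt ℂ F (0, x)) 
    (hFO : (fun p => F p - p.2) =O[𝓝 (0, x)] (fun p : ℂ × E => p.1))
    {G : ℂ × E → W} (hG : AnalyticAt ℂ G (0, x)) {j : ℕ}
    (hO : G =O[𝓝 (0, x)] (fun p : ℂ × E => p.1 ^ j)) :
    (fun p => G (stp F p) - G p) =O[𝓝 (0, x)] (fun p : ℂ × E => p.1 ^ (j + 1)) := by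
  obtain ⟨C, hC, r, hr, h⟩ := loc_bound hG hO
  obtain ⟨C', hC', hb⟩ := hFO.exists_pos
  have h0 : F (0, x) = x := by
    have := hb.bound.self_of_nhds
    simpa [sub_eq_zero] using this
  have hc1 : ∀ᶠ p in 𝓝 ((0 : ℂ), x), ‖F p - x‖ < r / 2 := by
    have : Tendsto (fun p => ‖F p - x‖) (𝓝 (0, x)) (𝓝 0) := by
      have := (hF.continuousAt.sub (continuousAt_const (y := x))).norm
      simpa [ContinuousAt, h0] using this
    exact this.eventually (gt_mem_nhds (by positivity))
  have hc2 : ∀ᶠ p in 𝓝 ((0 : ℂ), x), ‖p.2 - x‖ < r / 2 ∧ ‖p.1‖ < r := by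
    have h1 : Continuous fun p : ℂ × E => ‖p.2 - x‖ := by fun_prop
    have h2 : Continuous fun p : ℂ × E => ‖p.1‖ := by fun_prop
    refine ((h1.tendsto' (0, x) 0 (by simp)).eventually (gt_mem_nhds (by positivity))).and
      ((h2.tendsto' (0, x) 0 (by simp)).eventually (gt_mem_nhds (by positivity)))
  refine IsBigO.of_bound (C / (r / 4) * C') ?_
  filter_upwards [hc1, hc2, hb.bound] with p h1 h2 h3
  have key := cauchy_lip (φ := fun y => G (p.1, y)) (y := x) (r := r / 2) (ρ := r / 4)
    (M := C * ‖p.1‖ ^ j) (a := p.2) (b := F p) (by positivity)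
    (fun w hw => (h p.1 w h2.2 (by linarith)).1) (fun w hw => (h p.1 w h2.2 (by linarith)).2) h2.1.le h1.le
  refine key.trans ?_
  calc _ ≤ C * ‖p.1‖ ^ j / (r / 4) * (C' * ‖p.1‖) := by gcongr
    _ = _ := by rw [norm_pow]; ring

theorem dl_order {F : ℂ × E → E} {x : E} (hF : AnalyticAt ℂ F (0, x))
    (hFO : (fun p => F p - p.2) =O[𝓝 (0, x)] (fun p : ℂ × E => p.1)) (h0 : F (0, x) = x)
    {G : ℂ × E → W} (hG : AnalyticAt ℂ G (0, x)) {j : ℕ}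
    (hO : G =O[𝓝 (0, x)] (fun p : ℂ × E => p.1 ^ j)) (k : ℕ) :
    dl F G k =O[𝓝 (0, x)] (fun p : ℂ × E => p.1 ^ (j + k)) := by
  induction k with
  | zero => simpa [dl] using hO
  | succ k ih => exact comp_sub_order hF hFO (dl_analytic hF h0 hG k) ih

theorem slice_tendsto (x : E) : Tendsto (fun μ : ℂ => (μ, x)) (𝓝 0) (𝓝 (0, x)) :=
  (by fun_prop : Continuous fun μ : ℂ => (μ, x)).tendsto' _ _ rfl

theorem slice_order {G : ℂ × E → W} {x : E} {j : ℕ}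
    (hO : G =O[𝓝 (0, x)] (fun p : ℂ × E => p.1 ^ j)) :
    (fun μ => G (μ, x)) =O[𝓝 0] (fun μ : ℂ => μ ^ j) := hO.comp_tendsto (slice_tendsto x)

theorem fderiv_order {G : ℂ × E → W} {x : E} (hG : AnalyticAt ℂ G (0, x)) {j : ℕ}
    (hO : G =O[𝓝 (0, x)] (fun p : ℂ × E => p.1 ^ j)) :
    (fun μ : ℂ => fderiv ℂ (fun y => G (μ, y)) x) =O[𝓝 0] (fun μ : ℂ => μ ^ j) := by
  obtain ⟨C, hC, r, hr, h⟩ := loc_bound hG hO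
  refine IsBigO.of_bound (C / (r / 2)) ?_
  filter_upwards [Metric.ball_mem_nhds (0 : ℂ) hr] with μ hμ
  have hμ : ‖μ‖ < r := by simpa using hμ
  have := cauchy_fderiv (φ := fun y => G (μ, y)) (z := x) (ρ := r / 2) (M := C * ‖μ‖ ^ j) (by positivity)
    (fun w hw => (h μ w hμ (by linarith)).1) (fun w hw => (h μ w hμ (by linarith)).2)
  refine this.trans (le_of_eq ?_)
  rw [norm_pow]; ring

theorem slice_diff {G : ℂ × E → W} {x : E} (hG : AnalyticAt ℂ G (0, x)) :
    ∀ᶠ p in 𝓝 ((0 : ℂ), x), DifferentiableAt ℂ (fun y => G (p.1, y)) p.2 := by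
  filter_upwards [hG.eventually_analyticAt] with p hp
  have : DifferentiableAt ℂ G (p.1, p.2) := hp.differentiableAt
  fun_prop

end abs

end Emb
end

section

open Filter Topology Asymptotics

namespace Emb

section ham
variable {d : ℕ}

/-- phase space -/
abbrev Ph (d : ℕ) := (Fin d → ℂ) × (Fin d → ℂ)

/-- vector field family -/
noncomputable def XF (F : ℂ × Ph d → Ph d) (m : ℕ) (p : ℂ × Ph d) : Ph d :=
  lg m (fun k => dl F Prod.snd k p)

/-- Hamiltonian family -/
noncomputable def HF (F : ℂ × Ph d → Ph d) (A : ℂ × Ph d → ℂ) (m : ℕ) (p : ℂ × Ph d) : ℂ :=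
  ∑ i, p.2.1 i * (XF F m p).2 i - lg m (sh (fun k => dl F A k p))

theorem lg_analytic {E W : Type*} [NormedAddCommGroup E] [NormedSpace ℂ E] [NormedAddCommGroup W]
    [NormedSpace ℂ W] {a : ℕ → E → W} {p : E} (m : ℕ) (h : ∀ k, AnalyticAt ℂ (a k) p) :
    AnalyticAt ℂ (fun p => lg m (fun k => a k p)) p := by
  simp only [lg]
  exact Finset.analyticAt_fun_sum _ fun k _ => analyticAt_const.smul (h k)

theorem lg_fderiv {E W : Type*} [NormedAddCommGroup E] [NormedSpace ℂ E] [NormedAddCommGroup W]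
    [NormedSpace ℂ W] {a : ℕ → E → W} {p : E} (m : ℕ)
    (h : ∀ k ∈ Finset.range (m + 1), DifferentiableAt ℂ (a k) p) (v : E) :
    DifferentiableAt ℂ (fun p => lg m (fun k => a k p)) p ∧
    fderiv ℂ (fun p => lg m (fun k => a k p)) p v = lg m (fun k => fderiv ℂ (a k) p v) := by
  have h' : ∀ k ∈ Finset.Icc 1 m, DifferentiableAt ℂ (fun p => ((-1 : ℂ) ^ (k - 1) / (k : ℂ)) • a k p) p := by
    intro k hk
    exact (h k (by simp at hk ⊢; omega)).const_smul _
  simp only [lg]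
  refine ⟨DifferentiableAt.fun_sum h', ?_⟩
  rw [fderiv_fun_sum h', _root_.sum_apply]
  refine Finset.sum_congr rfl fun k hk => ?_
  rw [fderiv_fun_const_smul (h k (by simp at hk ⊢; omega))]; rfl

theorem ns_fderiv {E W : Type*} [NormedAddCommGroup E] [NormedSpace ℂ E] [NormedAddCommGroup W]
    [NormedSpace ℂ W] {a : ℕ → E → W} {p : E} (m : ℕ)
    (h : ∀ k ∈ Finset.range (m + 1), DifferentiableAt ℂ (a k) p) (v : E) :
    fderiv ℂ (fun p => ns m (fun k => a k p)) p v = ns m (fun k => fderiv ℂ (a k) p v) := by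
  have h' : ∀ k ∈ Finset.range (m + 1), DifferentiableAt ℂ (fun p => (m.choose k : ℂ) • a k p) p := by
    intro k hk
    exact (h k hk).const_smul _
  simp only [ns]
  rw [fderiv_fun_sum h', _root_.sum_apply]
  refine Finset.sum_congr rfl fun k hk => ?_
  rw [fderiv_fun_const_smul (h k hk)]; rfl

theorem ns_clm {V W : Type*} [NormedAddCommGroup V] [NormedSpace ℂ V] [NormedAddCommGroup W]
    [NormedSpace ℂ W] (L : V →L[ℂ] W) (n : ℕ) (a : ℕ → V) : L (ns n a) = ns n (fun k => L (a k)) := by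
  simp [ns]

theorem lg_clm {V W : Type*} [NormedAddCommGroup V] [NormedSpace ℂ V] [NormedAddCommGroup W]
    [NormedSpace ℂ W] (L : V →L[ℂ] W) (n : ℕ) (a : ℕ → V) : L (lg n a) = lg n (fun k => L (a k)) := by
  simp [lg]

/-- coordinates -/
noncomputable def c1 (i : Fin d) : Ph d →L[ℂ] ℂ :=
  (ContinuousLinearMap.proj i).comp (ContinuousLinearMap.fst ℂ _ _)
/-- coordinates -/
noncomputable def c2 (i : Fin d) : Ph d →L[ℂ] ℂ :=
  (ContinuousLinearMap.proj i).comp (ContinuousLinearMap.snd ℂ _ _)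

theorem c1_apply (i : Fin d) (x : Ph d) : c1 i x = x.1 i := rfl
theorem c2_apply (i : Fin d) (x : Ph d) : c2 i x = x.2 i := rfl

/-- hypotheses on the family near `(0,x)` -/
structure Fam (F : ℂ × Ph d → Ph d) (A : ℂ × Ph d → ℂ) (x : Ph d) : Prop where
  hF : AnalyticAt ℂ F (0, x)
  hA : AnalyticAt ℂ A (0, x)
  hFO : (fun p => F p - p.2) =O[𝓝 (0, x)] (fun p : ℂ × Ph d => p.1)
  hAO : A =O[𝓝 (0, x)] (fun p : ℂ × Ph d => p.1)
  h0 : F (0, x) = x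
  hid : ∀ᶠ p in 𝓝 ((0 : ℂ), x), ∀ v : Ph d,
    ∑ i, (F p).1 i * (fderiv ℂ (fun y => F (p.1, y)) p.2 v).2 i - ∑ i, p.2.1 i * v.2 i
      = fderiv ℂ (fun y => A (p.1, y)) p.2 v

variable {F : ℂ × Ph d → Ph d} {A : ℂ × Ph d → ℂ} {x : Ph d}

theorem iter_fst (F : ℂ × Ph d → Ph d) (n : ℕ) (p : ℂ × Ph d) : ((stp F)^[n] p).1 = p.1 := by
  induction n generalizing p with
  | zero => rfl
  | succ n ih => rw [Function.iterate_succ_apply, ih]; rfl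

theorem Fam.iter (h : Fam F A x) (n : ℕ) : ∀ᶠ p in 𝓝 ((0 : ℂ), x), ∀ v : Ph d,
    ∑ i, ((stp F)^[n] p).2.1 i * (fderiv ℂ (fun y => ((stp F)^[n] (p.1, y)).2) p.2 v).2 i
      - ∑ i, p.2.1 i * v.2 i
      = fderiv ℂ (fun y => ∑ j ∈ Finset.range n, A ((stp F)^[j] (p.1, y))) p.2 v := by
  induction n with
  | zero =>
    refine Eventually.of_forall fun p v => ?_
    simp
  | succ n ih =>
    have hit := iter_analytic h.hF h.h0
    have ht : Tendsto ((stp F)^[n]) (𝓝 (0, x)) (𝓝 (0, x)) := by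
      have := (hit n).1.continuousAt.tendsto
      rwa [(hit n).2] at this
    have e1 := ht.eventually h.hid
    have e2 := ht.eventually (slice_diff h.hF)
    have e2A := ht.eventually (slice_diff h.hA)
    have e3 : ∀ᶠ p in 𝓝 ((0 : ℂ), x), DifferentiableAt ℂ (fun y => ((stp F)^[n] (p.1, y)).2) p.2 :=
      slice_diff (G := fun p => ((stp F)^[n] p).2) (analyticAt_snd.comp (hit n).1)
    have e4 : ∀ᶠ p in 𝓝 ((0 : ℂ), x), DifferentiableAt ℂ
        (fun y => ∑ j ∈ Finset.range n, A ((stp F)^[j] (p.1, y))) p.2 := by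
      refine slice_diff (G := fun p => ∑ j ∈ Finset.range n, A ((stp F)^[j] p)) ?_
      refine Finset.analyticAt_fun_sum _ fun j _ => AnalyticAt.fun_comp ?_ (hit j).1
      rw [(hit j).2]; exact h.hA
    filter_upwards [ih, e1, e2, e2A, e3, e4] with p i1 i2 i3 i3A i4 i5 v
    rw [iter_fst] at i3 i3A
    set u := ((stp F)^[n] p).2 with hu
    have hpe : (stp F)^[n] p = (p.1, u) := by
      rw [hu]; exact Prod.ext (iter_fst F n p) rfl
    have hfun : ∀ y, (stp F)^[n] (p.1, y) = (p.1, ((stp F)^[n] (p.1, y)).2) := fun y =>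
      Prod.ext (iter_fst F n _) rfl
    have hu' : ((stp F)^[n] (p.1, p.2)).2 = u := rfl
    have d1 : fderiv ℂ (fun y => ((stp F)^[n + 1] (p.1, y)).2) p.2 v =
        fderiv ℂ (fun y => F (p.1, y)) u (fderiv ℂ (fun y => ((stp F)^[n] (p.1, y)).2) p.2 v) := by
      have : (fun y => ((stp F)^[n + 1] (p.1, y)).2) =
          (fun y => F (p.1, y)) ∘ (fun y => ((stp F)^[n] (p.1, y)).2) := by
        ext1 y
        rw [Function.iterate_succ_apply', hfun y]; rfl
      rw [this, fderiv_comp _ (by rw [hu']; exact i3) i4, hu']; rfl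
    have d2 : fderiv ℂ (fun y => A ((stp F)^[n] (p.1, y))) p.2 v =
        fderiv ℂ (fun y => A (p.1, y)) u (fderiv ℂ (fun y => ((stp F)^[n] (p.1, y)).2) p.2 v) := by
      have : (fun y => A ((stp F)^[n] (p.1, y))) =
          (fun y => A (p.1, y)) ∘ (fun y => ((stp F)^[n] (p.1, y)).2) := by
        ext1 y
        rw [hfun y]; rfl
      rw [this, fderiv_comp _ (by rw [hu']; exact i3A) i4, hu']; rfl
    have d3 : DifferentiableAt ℂ (fun y => A ((stp F)^[n] (p.1, y))) p.2 := by
      have : (fun y => A ((stp F)^[n] (p.1, y))) =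
          (fun y => A (p.1, y)) ∘ (fun y => ((stp F)^[n] (p.1, y)).2) := by
        ext1 y
        rw [hfun y]; rfl
      rw [this]
      exact DifferentiableAt.comp _ (by rw [hu']; exact i3A) i4
    simp only [Finset.sum_range_succ]
    rw [fderiv_fun_add i5 d3, _root_.add_apply, ← i1 v, d2, d1]
    have i2 := i2 (fderiv ℂ (fun y => ((stp F)^[n] (p.1, y)).2) p.2 v)
    rw [hpe] at i2
    simp only at i2
    rw [← i2, Function.iterate_succ_apply', hpe]
    simp only [stp]
    ring

theorem Fam.dlS (h : Fam F A x) (k : ℕ) : AnalyticAt ℂ (dl F Prod.snd k) (0, x) :=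
  dl_analytic h.hF h.h0 analyticAt_snd k

theorem Fam.dlA (h : Fam F A x) (k : ℕ) : AnalyticAt ℂ (dl F A k) (0, x) :=
  dl_analytic h.hF h.h0 h.hA k

theorem Fam.shA (h : Fam F A x) (k : ℕ) : AnalyticAt ℂ (fun p => sh (fun k => dl F A k p) k) (0, x) := by
  rcases k with _ | k
  · exact analyticAt_const
  · exact h.dlA k

theorem Fam.dlS_order (h : Fam F A x) (k : ℕ) :
    dl F Prod.snd k =O[𝓝 (0, x)] (fun p : ℂ × Ph d => p.1 ^ k) := by
  have : (Prod.snd : ℂ × Ph d → Ph d) =O[𝓝 (0, x)] (fun p : ℂ × Ph d => p.1 ^ 0) := by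
    simp only [pow_zero]
    exact (continuous_snd.continuousAt (x := ((0 : ℂ), x))).isBigO_one ℂ
  have := dl_order h.hF h.hFO h.h0 analyticAt_snd this k
  simpa using this

theorem Fam.shA_order (h : Fam F A x) (k : ℕ) :
    (fun p => sh (fun k => dl F A k p) k) =O[𝓝 (0, x)] (fun p : ℂ × Ph d => p.1 ^ k) := by
  rcases k with _ | k
  · exact isBigO_zero _ _
  · have := dl_order h.hF h.hFO h.h0 h.hA (j := 1) (by simpa using h.hAO) k
    rw [add_comm] at this
    exact this

theorem Fam.XF_analytic (h : Fam F A x) (m : ℕ) : AnalyticAt ℂ (XF F m) (0, x) :=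
  lg_analytic m h.dlS

theorem Fam.HF_analytic (h : Fam F A x) (m : ℕ) : AnalyticAt ℂ (HF F A m) (0, x) := by
  refine AnalyticAt.sub (Finset.analyticAt_fun_sum _ fun i _ => AnalyticAt.mul ?_ ?_) (lg_analytic m h.shA)
  · exact ((c1 i).comp (ContinuousLinearMap.snd ℂ ℂ (Ph d))).analyticAt _
  · exact ((c2 i).analyticAt _).comp (h.XF_analytic m)

theorem Fam.ham (h : Fam F A x) (m : ℕ) (v : Ph d) :
    (fun μ : ℂ => fderiv ℂ (fun y => HF F A m (μ, y)) x v -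
      ∑ i, ((XF F m (μ, x)).2 i * v.1 i - (XF F m (μ, x)).1 i * v.2 i)) =O[𝓝 0]
      (fun μ : ℂ => μ ^ (m + 1)) := by
  have sl := slice_tendsto (E := Ph d) x
  have key := leibniz (ι := Fin d) (m := m)
    (p := fun i k μ => (dl F Prod.snd k (μ, x)).1 i)
    (w := fun i k μ => (fderiv ℂ (fun y => dl F Prod.snd k (μ, y)) x v).2 i)
    (B := fun k μ => (if k = 0 then ∑ i, x.1 i * v.2 i else 0) +
      fderiv ℂ (fun y => sh (fun k => dl F A k (μ, y)) k) x v) ?_ ?_ ?_ ?_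
  · refine key.congr' ?_ EventuallyEq.rfl
    have e1 : ∀ᶠ μ in 𝓝 (0 : ℂ), ∀ k ∈ Finset.range (m + 1),
        DifferentiableAt ℂ (fun y => dl F Prod.snd k (μ, y)) x := by
      refine (Filter.eventually_all_finset _).2 fun k _ => sl.eventually (slice_diff (h.dlS k))
    have e2 : ∀ᶠ μ in 𝓝 (0 : ℂ), ∀ k ∈ Finset.range (m + 1),
        DifferentiableAt ℂ (fun y => sh (fun k => dl F A k (μ, y)) k) x := by
      refine (Filter.eventually_all_finset _).2 fun k _ => sl.eventually (slice_diff (h.shA k))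
    filter_upwards [e1, e2] with μ h1 h2
    obtain ⟨a1, a2⟩ := lg_fderiv m h1 v
    obtain ⟨b1, b2⟩ := lg_fderiv m h2 v
    have a1' : DifferentiableAt ℂ (fun y => XF F m (μ, y)) x := a1
    have a2' : fderiv ℂ (fun y => XF F m (μ, y)) x v = _ := a2
    have dd : ∀ i : Fin d, HasFDerivAt (fun y : Ph d => y.1 i * (XF F m (μ, y)).2 i)
        (x.1 i • ((c2 i).comp (fderiv ℂ (fun y => XF F m (μ, y)) x)) + (XF F m (μ, x)).2 i • c1 i) x := by
      intro i
      exact ((c1 i).hasFDerivAt (x := x)).mul ((c2 i).hasFDerivAt.comp x a1'.hasFDerivAt)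
    have dH := (HasFDerivAt.fun_sum fun i (_ : i ∈ Finset.univ) => dd i).sub b1.hasFDerivAt
    have dH' : fderiv ℂ (fun y => HF F A m (μ, y)) x = _ := dH.fderiv
    rw [dH', _root_.sub_apply, b2, _root_.sum_apply]
    have hl : lg m (fun k => (if k = 0 then ∑ i, x.1 i * v.2 i else 0) +
      fderiv ℂ (fun y => sh (fun k => dl F A k (μ, y)) k) x v) =
        lg m (fun k => fderiv ℂ (fun y => sh (fun k => dl F A k (μ, y)) k) x v) := by
      simp only [lg]
      refine Finset.sum_congr rfl fun k hk => ?_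
      rw [if_neg (by simp at hk; omega), zero_add]
    rw [hl, sub_right_comm, ← Finset.sum_sub_distrib]
    congr 1
    refine Finset.sum_congr rfl fun i _ => ?_
    have z1 : lg m (fun k => (dl F Prod.snd k (μ, x)).1 i) = (XF F m (μ, x)).1 i :=
      (lg_clm (c1 i) m _).symm
    have z2 : lg m (fun k => (fderiv ℂ (fun y => dl F Prod.snd k (μ, y)) x v).2 i) =
        (fderiv ℂ (fun y => XF F m (μ, y)) x v).2 i := by
      rw [a2']; exact (lg_clm (c2 i) m _).symm
    have z3 : (fderiv ℂ (fun y : Ph d => dl F Prod.snd 0 (μ, y)) x v) = v := by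
      simp [dl]
    simp only [z1, z2, z3]
    simp [dl, c1_apply, c2_apply]
    ring
  · intro i k
    exact ((c1 i).isBigO_comp _ _).trans (slice_order (h.dlS_order k))
  · intro i k
    refine ((c2 i).isBigO_comp _ _).trans ?_
    refine IsBigO.trans ?_ (fderiv_order (h.dlS k) (h.dlS_order k))
    exact (ContinuousLinearMap.apply ℂ (Ph d) v).isBigO_comp _ _
  · intro k
    refine IsBigO.add ?_ ?_
    · rcases k with _ | k
      · simp only [pow_zero]; exact isBigO_const_const _ one_ne_zero _
      · simp only [Nat.add_eq_zero_iff, one_ne_zero, and_false, if_false]; exact isBigO_zero _ _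
    · refine IsBigO.trans ?_ (fderiv_order (h.shA k) (h.shA_order k))
      exact (ContinuousLinearMap.apply ℂ ℂ v).isBigO_comp _ _
  · intro n
    have e1 : ∀ᶠ μ in 𝓝 (0 : ℂ), ∀ k ∈ Finset.range (n + 1),
        DifferentiableAt ℂ (fun y => dl F Prod.snd k (μ, y)) x := by
      refine (Filter.eventually_all_finset _).2 fun k _ => sl.eventually (slice_diff (h.dlS k))
    have e2 : ∀ᶠ μ in 𝓝 (0 : ℂ), ∀ k ∈ Finset.range (n + 1),
        DifferentiableAt ℂ (fun y => sh (fun k => dl F A k (μ, y)) k) x := by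
      refine (Filter.eventually_all_finset _).2 fun k _ => sl.eventually (slice_diff (h.shA k))
    filter_upwards [e1, e2, sl.eventually (h.iter n)] with μ h1 h2 h3
    have h3 := h3 v
    rw [sub_eq_iff_eq_add'] at h3
    have q1 : (fun y => ∑ j ∈ Finset.range n, A ((stp F)^[j] (μ, y))) =
        fun y => ns n (fun k => sh (fun k => dl F A k (μ, y)) k) := by
      ext y
      rw [← sum_ns]
      exact Finset.sum_congr rfl fun j _ => newton F A j _
    have q2 : (fun y => ((stp F)^[n] (μ, y)).2) = fun y => ns n (fun k => dl F Prod.snd k (μ, y)) := by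
      ext1 y
      exact newton F Prod.snd n _
    have q3 : ((stp F)^[n] (μ, x)).2 = ns n (fun k => dl F Prod.snd k (μ, x)) :=
      newton F Prod.snd n _
    simp only [q1, q2, q3] at h3
    rw [ns_fderiv n h1, ns_fderiv n h2] at h3
    rw [ns_add, show ns n (fun k => if k = 0 then ∑ i, x.1 i * v.2 i else 0) = ∑ i, x.1 i * v.2 i from ?_, ← h3]
    · refine Finset.sum_congr rfl fun i _ => ?_
      congr 1
      · exact (ns_clm (c1 i) n _).symm
      · exact (ns_clm (c2 i) n _).symm
    · rw [ns, Finset.sum_eq_single 0]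
      · simp
      · intro b _ hb; simp [hb]
      · simp

end ham

end Emb
end

section

open Filter Topology Asymptotics

namespace Emb

theorem poly_expand {E : Type*} [NormedAddCommGroup E] [NormedSpace ℂ E] {Q : E → ℂ} {z0 : E}
    (hQ : AnalyticAt ℂ Q z0) (N m D : ℕ) (b : Fin N → Polynomial ℂ) (hb : ∀ k, (b k).natDegree ≤ D)
    (w : Fin N → ℂ → E) (hw : ∀ k, w k =O[𝓝 0] (fun μ : ℂ => μ)) :
    ∃ V : ℂ → Polynomial ℂ, ∃ N' : ℕ, (∀ μ, (V μ).natDegree ≤ N') ∧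
      ∀ t : ℂ, (fun μ => Q (z0 + ∑ k, (b k).eval t • w k μ) - (V μ).eval t) =O[𝓝 0]
        (fun μ : ℂ => μ ^ (m + 1)) := by
  obtain ⟨p, hp⟩ := hQ
  refine ⟨fun μ => ∑ n ∈ Finset.range (m + 1), ∑ r : Fin n → Fin N,
    Polynomial.C (p n (fun i => w (r i) μ)) * ∏ i, b (r i), m * D, ?_, ?_⟩
  · intro μ
    refine Polynomial.natDegree_sum_le_of_forall_le _ _ fun n hn => ?_
    refine Polynomial.natDegree_sum_le_of_forall_le _ _ fun r _ => ?_
    refine (Polynomial.natDegree_C_mul_le _ _).trans ?_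
    refine (Polynomial.natDegree_prod_le _ _).trans ?_
    refine (Finset.sum_le_sum fun i _ => hb (r i)).trans ?_
    simp at hn ⊢
    exact Nat.mul_le_mul_right _ (by omega)
  · intro t
    have hO : (fun μ => ∑ k, (b k).eval t • w k μ) =O[𝓝 0] (fun μ : ℂ => μ) :=
      IsBigO.fun_sum fun k _ => (hw k).const_smul_left _
    have ht : Tendsto (fun μ => ∑ k, (b k).eval t • w k μ) (𝓝 0) (𝓝 0) :=
      hO.trans_tendsto tendsto_id
    have h1 := (hp.isBigO_sub_partialSum_pow (m + 1)).comp_tendsto ht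
    have h2 : (fun μ => ‖∑ k, (b k).eval t • w k μ‖ ^ (m + 1)) =O[𝓝 0] (fun μ : ℂ => μ ^ (m + 1)) :=
      hO.norm_left.pow _
    refine (h1.trans h2).congr_left fun μ => ?_
    simp only [Function.comp]
    congr 1
    simp only [FormalMultilinearSeries.partialSum, Polynomial.eval_finsetSum]
    refine Finset.sum_congr rfl fun n _ => ?_
    rw [ContinuousMultilinearMap.map_sum]
    refine Finset.sum_congr rfl fun r _ => ?_
    rw [ContinuousMultilinearMap.map_smul_univ]
    simp [Polynomial.eval_prod, mul_comm]

section res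
variable {d : ℕ} {F : ℂ × Ph d → Ph d} {A : ℂ × Ph d → ℂ} {x : Ph d}

theorem isBigO_coord {g : ℂ → Ph d} {φ : ℂ → ℂ} {l : Filter ℂ}
    (h : ∀ L : Ph d →L[ℂ] ℂ, (fun μ => L (g μ)) =O[l] φ) : g =O[l] φ := by
  have h1 : (fun μ => (g μ).1) =O[l] φ := isBigO_pi.2 fun i => h (c1 i)
  have h2 : (fun μ => (g μ).2) =O[l] φ := isBigO_pi.2 fun i => h (c2 i)
  exact h1.prod_left h2

/-- Newton interpolating curve -/
noncomputable def GF (F : ℂ × Ph d → Ph d) (x : Ph d) (m : ℕ) (t μ : ℂ) : Ph d :=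
  ∑ k ∈ Finset.range (m + 1), (bp k).eval t • dl F Prod.snd k (μ, x)
/-- its derivative -/
noncomputable def GF' (F : ℂ × Ph d → Ph d) (x : Ph d) (m : ℕ) (t μ : ℂ) : Ph d :=
  ∑ k ∈ Finset.range (m + 1), (bp k).derivative.eval t • dl F Prod.snd k (μ, x)

theorem L_GF (L : Ph d →L[ℂ] ℂ) (m : ℕ) (t μ : ℂ) :
    L (GF F x m t μ) = (nwt m (fun k => L (dl F Prod.snd k (μ, x)))).eval t := by
  rw [nwt_eval, GF, map_sum]
  refine Finset.sum_congr rfl fun k _ => ?_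
  rw [map_smul, smul_eq_mul, mul_comm]

theorem L_GF' (L : Ph d →L[ℂ] ℂ) (m : ℕ) (t μ : ℂ) :
    L (GF' F x m t μ) = (nwt m (fun k => L (dl F Prod.snd k (μ, x)))).derivative.eval t := by
  rw [nwt_deriv_eval, GF', map_sum]
  refine Finset.sum_congr rfl fun k _ => ?_
  rw [map_smul, smul_eq_mul, mul_comm]

theorem L_XF (L : Ph d →L[ℂ] ℂ) (m : ℕ) (p : ℂ × Ph d) :
    L (XF F m p) = (nwt m (fun k => L (dl F Prod.snd k p))).derivative.eval 0 := by
  rw [nwt_deriv_zero, XF, lg_clm]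

theorem Fam.iter_tendsto (h : Fam F A x) (n : ℕ) :
    Tendsto (fun μ : ℂ => (stp F)^[n] (μ, x)) (𝓝 0) (𝓝 (0, x)) := by
  have hit := iter_analytic h.hF h.h0 n
  have := hit.1.continuousAt.tendsto
  rw [hit.2] at this
  exact this.comp (slice_tendsto x)

theorem Fam.L_order (h : Fam F A x) (L : Ph d →L[ℂ] ℂ) (n k : ℕ) :
    (fun μ : ℂ => L (dl F Prod.snd k ((stp F)^[n] (μ, x)))) =O[𝓝 0] (fun μ : ℂ => μ ^ k) := by
  refine (L.isBigO_comp _ _).trans ?_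
  refine ((h.dlS_order k).comp_tendsto (h.iter_tendsto n)).congr_right fun μ => ?_
  simp [Function.comp, iter_fst]

theorem Fam.GF_nat (h : Fam F A x) (m n : ℕ) :
    (fun μ : ℂ => GF F x m n μ - ((stp F)^[n] (μ, x)).2) =O[𝓝 0] (fun μ : ℂ => μ ^ (m + 1)) := by
  refine isBigO_coord fun L => ?_
  refine (nwt_sub_ns (fun k => h.L_order L 0 k) m n).congr_left fun μ => ?_
  rw [map_sub, L_GF, newton F Prod.snd n, ns_clm]; rfl

theorem Fam.shift (h : Fam F A x) (L : Ph d →L[ℂ] ℂ) (m n : ℕ) :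
    (fun μ : ℂ => L (GF' F x m n μ) - L (XF F m ((stp F)^[n] (μ, x)))) =O[𝓝 0]
      (fun μ : ℂ => μ ^ (m + 1)) := by
  let U : ℂ → Polynomial ℂ := fun μ =>
    (nwt m (fun k => L (dl F Prod.snd k (μ, x)))).comp (Polynomial.X + Polynomial.C (n : ℂ)) -
      nwt m (fun k => L (dl F Prod.snd k ((stp F)^[n] (μ, x))))
  have hU : ∀ j : ℕ, (fun μ => (U μ).eval (j : ℂ)) =O[𝓝 0] (fun μ : ℂ => μ ^ (m + 1)) := by
    intro j
    refine ((nwt_sub_ns (fun k => h.L_order L 0 k) m (j + n)).sub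
      (nwt_sub_ns (fun k => h.L_order L n k) m j)).congr_left fun μ => ?_
    simp only [U, Polynomial.eval_sub, Polynomial.eval_comp, Polynomial.eval_add, Polynomial.eval_X,
      Polynomial.eval_C, Function.iterate_zero, id]
    rw [← ns_clm, ← ns_clm, ← newton F Prod.snd, ← newton F Prod.snd, ← Function.iterate_add_apply]
    push_cast
    ring
  have := (poly_isBigO U m (fun μ => ?_) hU 0).2
  · refine this.congr_left fun μ => ?_
    simp only [U, Polynomial.derivative_sub, Polynomial.derivative_comp, Polynomial.eval_sub, Polynomial.eval_mul,
      Polynomial.eval_comp]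
    rw [L_GF', L_XF]
    simp
  · refine (Polynomial.natDegree_sub_le _ _).trans (max_le ?_ (nwt_natDegree _ _))
    refine Polynomial.natDegree_comp_le.trans ?_
    rw [Polynomial.natDegree_X_add_C, mul_one]
    exact nwt_natDegree _ _

theorem Fam.GF_sub (h : Fam F A x) (m : ℕ) (t : ℂ) :
    (fun μ : ℂ => GF F x m t μ - x) =O[𝓝 0] (fun μ : ℂ => μ) := by
  simp only [GF]
  simp only [Finset.sum_range_succ']
  have : ∀ μ : ℂ, (bp 0).eval t • dl F Prod.snd 0 (μ, x) = x := by intro μ; simp [bp, dl]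
  simp only [this, add_sub_cancel_right]
  refine IsBigO.fun_sum fun k _ => ?_
  have : (fun μ => dl F Prod.snd (k + 1) (μ, x)) =O[𝓝 0] (fun μ : ℂ => μ) := by
    refine (slice_order (h.dlS_order (k + 1))).trans ?_
    simpa using pow_isBigO (show 1 ≤ k + 1 by omega)
  exact this.const_smul_left ((bp (k + 1)).eval t)

theorem Fam.GF_tendsto (h : Fam F A x) (m : ℕ) (t : ℂ) :
    Tendsto (fun μ : ℂ => (μ, GF F x m t μ)) (𝓝 0) (𝓝 (0, x)) := by
  refine Tendsto.prodMk_nhds tendsto_id ?_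
  have := ((h.GF_sub m t).trans_tendsto tendsto_id).add_const x
  simpa using this

theorem Fam.residual (h : Fam F A x) (m : ℕ) (t : ℂ) :
    (fun μ : ℂ => GF' F x m t μ - XF F m (μ, GF F x m t μ)) =O[𝓝 0] (fun μ : ℂ => μ ^ (m + 1)) := by
  refine isBigO_coord fun L => ?_
  have hQ : AnalyticAt ℂ (fun p => L (XF F m p)) (0, x) := (L.analyticAt _).comp (h.XF_analytic m)
  obtain ⟨V, N', hV, hVO⟩ := poly_expand hQ (m + 1) m m (fun k => bp k)
    (fun k => (bp_natDegree k).trans (by omega))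
    (fun k μ => if (k : ℕ) = 0 then (μ, (0 : Ph d)) else ((0 : ℂ), dl F Prod.snd k (μ, x))) (by
      intro k
      by_cases hk : (k : ℕ) = 0
      · simp only [hk, if_true]
        refine IsBigO.of_bound 1 (Eventually.of_forall fun μ => ?_)
        simp [Prod.norm_def]
      · simp only [hk, if_false]
        refine IsBigO.prod_left (isBigO_zero _ _) ?_
        refine (slice_order (h.dlS_order k)).trans ?_
        simpa using pow_isBigO (show 1 ≤ (k : ℕ) by omega))
  have hcurve : ∀ t μ : ℂ, ((0 : ℂ), x) + ∑ k : Fin (m + 1), (bp k).eval t •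
      (if (k : ℕ) = 0 then (μ, (0 : Ph d)) else ((0 : ℂ), dl F Prod.snd k (μ, x))) = (μ, GF F x m t μ) := by
    intro t μ
    rw [Fin.sum_univ_eq_sum_range (fun k => (bp k).eval t • (if k = 0 then (μ, (0 : Ph d)) else
      ((0 : ℂ), dl F Prod.snd k (μ, x)))), Finset.sum_range_succ', GF, Finset.sum_range_succ']
    simp only [Nat.add_eq_zero_iff, one_ne_zero, and_false, if_false, if_true, bp, dl, Polynomial.eval_one, one_smul]
    refine Prod.ext ?_ ?_
    · simp [Prod.fst_sum]
    · simp [Prod.snd_sum, add_comm]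
  simp only [hcurve] at hVO
  let U : ℂ → Polynomial ℂ := fun μ =>
    (nwt m (fun k => L (dl F Prod.snd k (μ, x)))).derivative - V μ
  have hUd : ∀ μ, (U μ).natDegree ≤ max m N' := by
    intro μ
    refine (Polynomial.natDegree_sub_le _ _).trans (max_le_max ?_ (hV μ))
    exact (Polynomial.natDegree_derivative_le _).trans ((Nat.sub_le _ _).trans (nwt_natDegree _ _))
  have hU : ∀ n : ℕ, (fun μ => (U μ).eval (n : ℂ)) =O[𝓝 0] (fun μ : ℂ => μ ^ (m + 1)) := by
    intro n
    have s1 := h.shift L m n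
    have s2 : (fun μ : ℂ => L (XF F m ((stp F)^[n] (μ, x))) - L (XF F m (μ, GF F x m n μ))) =O[𝓝 0]
        (fun μ : ℂ => μ ^ (m + 1)) := by
      have := hQ.hasStrictFDerivAt.isBigO_sub.comp_tendsto
        ((h.iter_tendsto n).prodMk_nhds (h.GF_tendsto m n))
      refine this.trans ?_
      simp only [Function.comp_def]
      refine ((h.GF_nat m n).neg_left).congr_left (f₁ := _) (fun μ => rfl) |>.norm_left |>.congr_left (fun μ => ?_) |>.of_norm_left
      have e : (stp F)^[n] (μ, x) = (μ, ((stp F)^[n] (μ, x)).2) := Prod.ext (iter_fst F n _) rfl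
      rw [e]
      simp [Prod.norm_def]
    have s3 := hVO n
    refine ((s1.add s2).add s3).congr_left fun μ => ?_
    simp only [U, Polynomial.eval_sub]
    rw [L_GF']
    ring
  refine ((poly_isBigO U _ hUd hU t).1.sub (hVO t)).congr_left fun μ => ?_
  simp only [U, Polynomial.eval_sub, map_sub]
  rw [L_GF']
  ring

end res
end Emb
end

section

open Filter Topology Asymptotics

namespace Emb

section par
variable {E : Type*} [NormedAddCommGroup E] [NormedSpace ℂ E]
variable {W : Type*} [NormedAddCommGroup W] [NormedSpace ℂ W] [CompleteSpace W]

theorem par_deriv (j : ℕ) (x : E) : ∀ g : ℂ × E → W, AnalyticAt ℂ g (0, x) →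
    AnalyticAt ℂ (fun y => iteratedDeriv j (fun μ => g (μ, y)) 0) x ∧
    ∀ v, fderiv ℂ (fun y => iteratedDeriv j (fun μ => g (μ, y)) 0) x v =
      iteratedDeriv j (fun μ => fderiv ℂ (fun y => g (μ, y)) x v) 0 := by
  induction j with
  | zero =>
    intro g hg
    simp only [iteratedDeriv_zero]
    refine ⟨AnalyticAt.fun_comp (g := g) (f := fun y => ((0 : ℂ), y)) hg
      (analyticAt_const.prod analyticAt_id), fun v => trivial⟩
  | succ j ih =>
    intro g hg
    have hA : AnalyticAt ℂ (fun p => fderiv ℂ g p ((1 : ℂ), (0 : E))) (0, x) :=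
      ((ContinuousLinearMap.apply ℂ W ((1 : ℂ), (0 : E))).analyticAt _).comp hg.fderiv
    obtain ⟨i1, i2⟩ := ih _ hA
    have d1 : ∀ p : ℂ × E, DifferentiableAt ℂ g p →
        HasDerivAt (fun μ => g (μ, p.2)) (fderiv ℂ g p ((1 : ℂ), (0 : E))) p.1 := by
      intro p hp
      have := hp.hasFDerivAt.comp_hasDerivAt (x := p.1) (f := fun μ => (μ, p.2))
        ((hasDerivAt_id p.1).prodMk (hasDerivAt_const p.1 p.2))
      exact this
    have d2 : ∀ p : ℂ × E, DifferentiableAt ℂ g p → ∀ v,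
        fderiv ℂ (fun y => g (p.1, y)) p.2 v = fderiv ℂ g p ((0 : ℂ), v) := by
      intro p hp v
      have hh : HasFDerivAt (fun y : E => (p.1, y)) (ContinuousLinearMap.inr ℂ ℂ E) p.2 :=
        hasFDerivAt_prodMk_right p.1 p.2
      have := hp.hasFDerivAt.comp (x := p.2) (f := fun y => (p.1, y)) hh
      have h3 := this.fderiv
      simp only [Function.comp_def] at h3
      rw [h3]; simp
    have e0 := hg.eventually_analyticAt
    have e1 : ∀ᶠ p in 𝓝 ((0 : ℂ), x), ∀ᶠ q in 𝓝 p, AnalyticAt ℂ g q := e0.eventually_nhds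
    have hsl : Tendsto (fun y : E => ((0 : ℂ), y)) (𝓝 x) (𝓝 (0, x)) :=
      (by fun_prop : Continuous fun y : E => ((0 : ℂ), y)).tendsto' _ _ rfl
    have heq : (fun y => iteratedDeriv (j + 1) (fun μ => g (μ, y)) 0) =ᶠ[𝓝 x]
        fun y => iteratedDeriv j (fun μ => fderiv ℂ g (μ, y) ((1 : ℂ), (0 : E))) 0 := by
      filter_upwards [hsl.eventually e1] with y hy
      rw [iteratedDeriv_succ']
      refine Filter.EventuallyEq.iteratedDeriv_eq j ?_
      filter_upwards [(slice_tendsto y).eventually hy] with μ hμ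
      exact (d1 (μ, y) hμ.differentiableAt).deriv
    refine ⟨i1.congr heq.symm, fun v => ?_⟩
    rw [heq.fderiv_eq, i2 v, iteratedDeriv_succ']
    refine Filter.EventuallyEq.iteratedDeriv_eq j ?_
    filter_upwards [(slice_tendsto x).eventually e1] with μ hμ
    have hμ0 : AnalyticAt ℂ g (μ, x) := hμ.self_of_nhds
    have hD : HasFDerivAt (fderiv ℂ g) (fderiv ℂ (fderiv ℂ g) (μ, x)) (μ, x) :=
      hμ0.fderiv.differentiableAt.hasFDerivAt
    have l1 : fderiv ℂ (fun y => fderiv ℂ g (μ, y) ((1 : ℂ), (0 : E))) x v =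
        fderiv ℂ (fderiv ℂ g) (μ, x) (0, v) (1, 0) := by
      have hh : HasFDerivAt (fun y : E => (μ, y)) (ContinuousLinearMap.inr ℂ ℂ E) x :=
        hasFDerivAt_prodMk_right μ x
      have := (ContinuousLinearMap.apply ℂ W ((1 : ℂ), (0 : E))).hasFDerivAt.comp x
        (hD.comp (x := x) (f := fun y => (μ, y)) hh)
      have h3 := this.fderiv
      simp only [Function.comp_def] at h3
      have h4 := congrArg (fun L => L v) h3
      simpa using h4
    have l2 : deriv (fun μ => fderiv ℂ (fun y => g (μ, y)) x v) μ =
        fderiv ℂ (fderiv ℂ g) (μ, x) (1, 0) (0, v) := by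
      have he : (fun μ => fderiv ℂ (fun y => g (μ, y)) x v) =ᶠ[𝓝 μ]
          fun μ => fderiv ℂ g (μ, x) ((0 : ℂ), v) := by
        have ht : Tendsto (fun μ : ℂ => (μ, x)) (𝓝 μ) (𝓝 (μ, x)) :=
          (by fun_prop : Continuous fun μ : ℂ => (μ, x)).tendsto' _ _ rfl
        filter_upwards [ht.eventually hμ] with ν hν
        exact d2 (ν, x) hν.differentiableAt v
      rw [he.deriv_eq]
      have := (hD.comp_hasDerivAt (x := μ) (f := fun μ => (μ, x))
        ((hasDerivAt_id μ).prodMk (hasDerivAt_const μ x)))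
      have := ((ContinuousLinearMap.apply ℂ W ((0 : ℂ), v)).hasFDerivAt.comp_hasDerivAt μ this).deriv
      simpa [Function.comp_def] using this
    rw [l1, l2]
    have hs := (hμ0.contDiffAt (n := 2)).isSymmSndFDerivAt (by simp)
    exact (hs _ _)

theorem tc_par (j : ℕ) {x : E} {g : ℂ × E → W} (hg : AnalyticAt ℂ g (0, x)) :
    AnalyticAt ℂ (fun y => tc j (fun μ => g (μ, y))) x ∧
    ∀ v, fderiv ℂ (fun y => tc j (fun μ => g (μ, y))) x v =
      tc j (fun μ => fderiv ℂ (fun y => g (μ, y)) x v) := by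
  obtain ⟨h1, h2⟩ := par_deriv j x g hg
  simp only [tc]
  refine ⟨analyticAt_const.smul h1, fun v => ?_⟩
  rw [fderiv_fun_const_smul h1.differentiableAt]
  rw [← h2]; rfl

theorem par_fderiv_analytic {x : E} {g : ℂ × E → W} (hg : AnalyticAt ℂ g (0, x)) (v : E) :
    AnalyticAt ℂ (fun μ : ℂ => fderiv ℂ (fun y => g (μ, y)) x v) 0 := by
  have hA : AnalyticAt ℂ (fun p => fderiv ℂ g p ((0 : ℂ), v)) (0, x) :=
    ((ContinuousLinearMap.apply ℂ W ((0 : ℂ), v)).analyticAt _).comp hg.fderiv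
  have hB : AnalyticAt ℂ (fun μ : ℂ => fderiv ℂ g (μ, x) ((0 : ℂ), v)) 0 :=
    AnalyticAt.fun_comp (g := fun p => fderiv ℂ g p ((0 : ℂ), v)) (f := fun μ : ℂ => (μ, x)) hA
      (analyticAt_id.prod analyticAt_const)
  refine hB.congr ?_
  filter_upwards [(slice_tendsto x).eventually hg.eventually_analyticAt] with μ hμ
  have hh : HasFDerivAt (fun y : E => (μ, y)) (ContinuousLinearMap.inr ℂ ℂ E) x :=
    hasFDerivAt_prodMk_right μ x
  have := hμ.differentiableAt.hasFDerivAt.comp (x := x) (f := fun y => (μ, y)) hh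
  have h3 := this.fderiv
  simp only [Function.comp_def] at h3
  rw [h3]; simp

end par

section ham
variable {d : ℕ} {F : ℂ × Ph d → Ph d} {A : ℂ × Ph d → ℂ} {x : Ph d}

/-- truncated vector field -/
noncomputable def XH (F : ℂ × Ph d → Ph d) (m : ℕ) (y : Ph d) : Ph d :=
  ∑ j ∈ Finset.range (m + 1), tc j (fun μ => XF F m (μ, y))
/-- truncated Hamiltonian -/
noncomputable def HH (F : ℂ × Ph d → Ph d) (A : ℂ × Ph d → ℂ) (m : ℕ) (y : Ph d) : ℂ :=
  ∑ j ∈ Finset.range (m + 1), tc j (fun μ => HF F A m (μ, y))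

theorem Fam.HH_analytic (h : Fam F A x) (m : ℕ) : AnalyticAt ℂ (HH F A m) x :=
  Finset.analyticAt_fun_sum _ fun j _ => (tc_par j (h.HF_analytic m)).1

theorem Fam.XF_slice (h : Fam F A x) (m : ℕ) : AnalyticAt ℂ (fun μ => XF F m (μ, x)) 0 :=
  AnalyticAt.fun_comp (g := XF F m) (f := fun μ : ℂ => (μ, x)) (h.XF_analytic m)
      (analyticAt_id.prod analyticAt_const)

theorem Fam.XH_analytic (h : Fam F A x) (m : ℕ) : AnalyticAt ℂ (XH F m) x :=
  Finset.analyticAt_fun_sum _ fun j _ => (tc_par j (h.XF_analytic m)).1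

theorem Fam.HH_fderiv (h : Fam F A x) (m : ℕ) (v : Ph d) :
    fderiv ℂ (HH F A m) x v = ∑ i, ((XH F m x).2 i * v.1 i - (XH F m x).1 i * v.2 i) := by
  let L : Ph d →L[ℂ] ℂ := ∑ i, (v.1 i • c2 i - v.2 i • c1 i)
  have hL : ∀ y : Ph d, L y = ∑ i, (y.2 i * v.1 i - y.1 i * v.2 i) := by
    intro y
    simp only [L, _root_.sum_apply, _root_.sub_apply, _root_.smul_apply, smul_eq_mul, c1_apply, c2_apply]
    exact Finset.sum_congr rfl fun i _ => by ring
  rw [← hL]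
  have e1 : fderiv ℂ (HH F A m) x v =
      ∑ j ∈ Finset.range (m + 1), tc j (fun μ => fderiv ℂ (fun y => HF F A m (μ, y)) x v) := by
    have : HH F A m = fun y => ∑ j ∈ Finset.range (m + 1), tc j (fun μ => HF F A m (μ, y)) := rfl
    rw [this, fderiv_fun_sum fun j _ => (tc_par j (h.HF_analytic m)).1.differentiableAt, _root_.sum_apply]
    exact Finset.sum_congr rfl fun j _ => (tc_par j (h.HF_analytic m)).2 v
  rw [e1, XH, map_sum]
  refine Finset.sum_congr rfl fun j hj => ?_
  rw [← tc_clm L (h.XF_slice m)]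
  refine tc_eq_of_isBigO (n := m + 1) (par_fderiv_analytic (h.HF_analytic m) v)
    ((L.analyticAt _).comp (h.XF_slice m)) ?_ (by simpa using hj)
  refine (h.ham m v).congr_left fun μ => ?_
  rw [Function.comp_apply, hL]

end ham
end Emb
end

section

open Filter Topology Asymptotics

namespace Emb

theorem local_inv {E : Type*} [NormedAddCommGroup E] [NormedSpace ℂ E] [FiniteDimensional ℂ E]
    {f : E → E} {a : E} (hf : AnalyticAt ℂ f a) (hinj : ∀ v, fderiv ℂ f a v = 0 → v = 0) :
    ∃ g : E → E, AnalyticAt ℂ g (f a) ∧ g (f a) = a ∧ ∀ᶠ y in 𝓝 (f a), f (g y) = y := by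
  have : CompleteSpace E := FiniteDimensional.complete ℂ E
  have hi : Function.Injective (fderiv ℂ f a : E →ₗ[ℂ] E) := by
    rw [← LinearMap.ker_eq_bot, LinearMap.ker_eq_bot']
    exact hinj
  let e : E ≃L[ℂ] E := (LinearEquiv.ofInjectiveEndo _ hi).toContinuousLinearEquiv
  have he : (e : E →L[ℂ] E) = fderiv ℂ f a := by ext v; rfl
  have hs : HasStrictFDerivAt f (e : E →L[ℂ] E) a := by rw [he]; exact hf.hasStrictFDerivAt
  refine ⟨hs.localInverse f e a, ?_, hs.localInverse_apply_image, hs.eventually_right_inverse⟩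
  have := (hs.toOpenPartialHomeomorph f).analyticAt_symm' (a := a) (i := e)
    hs.mem_toOpenPartialHomeomorph_source hf he.symm
  exact this

section fam
variable {d : ℕ}

/-- generating function data -/
structure GS (S : Ph d → ℂ) (D : Set (Ph d)) (ε : ℝ) : Prop where
  hS : AnalyticOnNhd ℂ S D
  hε : 0 < ε
  hp : ∀ x ∈ D, ‖pGrad d S x‖ ≤ ε
  hq : ∀ x ∈ D, ‖qGrad d S x‖ ≤ ε

/-- solution of the implicit equation -/
def Sol (S : Ph d → ℂ) (D : Set (Ph d)) (p : ℂ × Ph d) (P : Fin d → ℂ) : Prop :=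
  (P, p.2.2) ∈ D ∧ p.2.1 = P + p.1 • qGrad d S (P, p.2.2)

open Classical in
/-- the chosen solution -/
noncomputable def FP (S : Ph d → ℂ) (D : Set (Ph d)) (p : ℂ × Ph d) : Fin d → ℂ :=
  if h : ∃ P, Sol S D p P then h.choose else p.2.1

/-- the family of maps -/
noncomputable def FF (S : Ph d → ℂ) (D : Set (Ph d)) (p : ℂ × Ph d) : Ph d :=
  (FP S D p, p.2.2 + p.1 • pGrad d S (FP S D p, p.2.2))

/-- action -/
noncomputable def AF (S : Ph d → ℂ) (D : Set (Ph d)) (p : ℂ × Ph d) : ℂ :=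
  p.1 * (∑ i, FP S D p i * pGrad d S (FP S D p, p.2.2) i - S (FP S D p, p.2.2))

variable {S : Ph d → ℂ} {D : Set (Ph d)} {ε : ℝ}

theorem grad_analytic {x : Ph d} (h : AnalyticAt ℂ S x) :
    AnalyticAt ℂ (pGrad d S) x ∧ AnalyticAt ℂ (qGrad d S) x := by
  constructor
  · refine AnalyticAt.pi fun i => ?_
    exact ((ContinuousLinearMap.apply ℂ ℂ ((Pi.single i 1, 0) : Ph d)).analyticAt _).comp h.fderiv
  · refine AnalyticAt.pi fun i => ?_
    exact ((ContinuousLinearMap.apply ℂ ℂ ((0, Pi.single i 1) : Ph d)).analyticAt _).comp h.fderiv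

theorem fderiv_eq_grad (x v : Ph d) :
    fderiv ℂ S x v = ∑ i, pGrad d S x i * v.1 i + ∑ i, qGrad d S x i * v.2 i := by
  have hv : v = ∑ i, v.1 i • ((Pi.single i 1, 0) : Ph d) + ∑ i, v.2 i • ((0, Pi.single i 1) : Ph d) := by
    refine Prod.ext ?_ ?_
    · ext j
      simp [Prod.fst_sum, Finset.sum_apply, Pi.single_apply]
    · ext j
      simp [Prod.snd_sum, Finset.sum_apply, Pi.single_apply]
  conv_lhs => rw [hv]
  simp only [map_add, map_sum, map_smul, smul_eq_mul, pGrad, qGrad]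
  simp only [mul_comm]

theorem Sol.near (h : GS S D ε) {p : ℂ × Ph d} {P : Fin d → ℂ} (hP : Sol S D p P) :
    ‖P - p.2.1‖ ≤ ‖p.1‖ * ε := by
  have : P - p.2.1 = -(p.1 • qGrad d S (P, p.2.2)) := by rw [hP.2]; abel
  rw [this, norm_neg, norm_smul]
  exact mul_le_mul_of_nonneg_left (h.hq _ hP.1) (norm_nonneg _)

theorem mem_room {y : Ph d} {r : ℝ} (hr : Metric.closedBall y r ⊆ D) {z : Ph d}
    (h1 : ‖z.1 - y.1‖ ≤ r) (h2 : ‖z.2 - y.2‖ ≤ r) : z ∈ D := by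
  apply hr
  rw [mem_closedBall_iff_norm, Prod.norm_def]
  exact max_le h1 h2

theorem qslice (h : GS S D ε) {μ : ℂ} {y : Ph d} {r h0 : ℝ} (hr : Metric.closedBall y r ⊆ D) (hμ : ‖μ‖ * ε ≤ h0)
    (w : Fin d → ℂ) (hw : ‖w - y.1‖ ≤ r) :
    DifferentiableAt ℂ (fun P => μ • qGrad d S (P, y.2)) w ∧ ‖μ • qGrad d S (w, y.2)‖ ≤ h0 := by
  have hm : (w, y.2) ∈ D := mem_room hr hw (by simpa using (norm_nonneg _).trans hw)
  constructor
  · have := (grad_analytic (h.hS _ hm)).2.differentiableAt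
    fun_prop
  · rw [norm_smul]
    exact (mul_le_mul_of_nonneg_left (h.hq _ hm) (norm_nonneg _)).trans hμ

theorem qlip (h : GS S D ε) {μ : ℂ} {y : Ph d} {h0 : ℝ} (hh : 0 < h0) (hr : Metric.closedBall y (3 * h0) ⊆ D)
    (hμ : ‖μ‖ * ε ≤ h0) {a b : Fin d → ℂ} (ha : ‖a - y.1‖ ≤ h0) (hb : ‖b - y.1‖ ≤ h0) :
    ‖μ • qGrad d S (b, y.2) - μ • qGrad d S (a, y.2)‖ ≤ 1 / 2 * ‖b - a‖ := by
  have := cauchy_lip (φ := fun P => μ • qGrad d S (P, y.2)) (y := y.1) (r := h0) (ρ := 2 * h0) (M := h0)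
    (by positivity) (fun w hw => (qslice h hr hμ w (by linarith)).1)
    (fun w hw => (qslice h hr hμ w (by linarith)).2) ha hb
  refine this.trans (le_of_eq ?_)
  congr 1
  field_simp

theorem sol_exists (h : GS S D ε) {p : ℂ × Ph d} {h0 : ℝ} (hh : 0 < h0)
    (hr : Metric.closedBall p.2 (3 * h0) ⊆ D) (hμ : ‖p.1‖ * ε ≤ h0) : ∃ P, Sol S D p P := by
  let T : (Fin d → ℂ) → (Fin d → ℂ) := fun P => p.2.1 - p.1 • qGrad d S (P, p.2.2)
  have hmt : Set.MapsTo T (Metric.closedBall p.2.1 h0) (Metric.closedBall p.2.1 h0) := by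
    intro P hP
    rw [mem_closedBall_iff_norm] at hP ⊢
    simp only [T, sub_sub_cancel_left, norm_neg]
    exact (qslice h hr hμ P (by linarith)).2
  have hc : ContractingWith (1 / 2) (hmt.restrict T _ _) := by
    refine ⟨by rw [← NNReal.coe_lt_coe]; norm_num, LipschitzWith.of_dist_le_mul ?_⟩
    rintro ⟨a, ha⟩ ⟨b, hb⟩
    rw [mem_closedBall_iff_norm] at ha hb
    simp only [Subtype.dist_eq, Set.MapsTo.val_restrict_apply, dist_eq_norm, T]
    have := qlip h hh hr hμ ha hb
    rw [sub_sub_sub_cancel_left, norm_sub_rev a b]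
    simpa using this
  obtain ⟨P, hP, hfix, -⟩ := hc.exists_fixedPoint' (Metric.isClosed_closedBall.isComplete) hmt
    (Metric.mem_closedBall_self hh.le) (edist_ne_top _ _)
  refine ⟨P, ?_, ?_⟩
  · rw [mem_closedBall_iff_norm] at hP
    exact mem_room hr (by simpa using hP.trans (by linarith)) (by simpa using hh.le)
  · have : T P = P := hfix
    rw [← sub_eq_iff_eq_add]
    exact this

theorem sol_unique (h : GS S D ε) {p : ℂ × Ph d} {h0 : ℝ} (hh : 0 < h0)
    (hr : Metric.closedBall p.2 (3 * h0) ⊆ D) (hμ : ‖p.1‖ * ε ≤ h0) {P P' : Fin d → ℂ}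
    (hP : Sol S D p P) (hP' : Sol S D p P') : P = P' := by
  have := qlip h hh hr hμ ((hP.near h).trans hμ) ((hP'.near h).trans hμ)
  have e : p.1 • qGrad d S (P', p.2.2) - p.1 • qGrad d S (P, p.2.2) = P - P' := by
    have h1 := hP.2
    have h2 := hP'.2
    rw [h1] at h2
    rw [sub_eq_sub_iff_add_eq_add, add_comm, ← h2, add_comm]
  rw [e, norm_sub_rev P' P] at this
  have : ‖P - P'‖ ≤ 0 := by linarith
  simpa [sub_eq_zero] using this

theorem FP_sol (h : GS S D ε) {p : ℂ × Ph d} {h0 : ℝ} (hh : 0 < h0)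
    (hr : Metric.closedBall p.2 (3 * h0) ⊆ D) (hμ : ‖p.1‖ * ε ≤ h0) : Sol S D p (FP S D p) := by
  have := sol_exists h hh hr hμ
  rw [FP, dif_pos this]
  exact this.choose_spec

theorem FP_eq (h : GS S D ε) {p : ℂ × Ph d} {h0 : ℝ} (hh : 0 < h0)
    (hr : Metric.closedBall p.2 (3 * h0) ⊆ D) (hμ : ‖p.1‖ * ε ≤ h0) {P : Fin d → ℂ}
    (hP : Sol S D p P) : FP S D p = P :=
  sol_unique h hh hr hμ (FP_sol h hh hr hμ) hP

theorem FF_zero (y : Ph d) : FF S D (0, y) = y := by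
  have : FP S D (0, y) = y.1 := by
    rw [FP]
    split_ifs with h
    · have := h.choose_spec.2
      simpa using this.symm
    · rfl
  simp [FF, this]

theorem FF_near (h : GS S D ε) {p : ℂ × Ph d} {h0 : ℝ} (hh : 0 < h0)
    (hr : Metric.closedBall p.2 (3 * h0) ⊆ D) (hμ : ‖p.1‖ * ε ≤ h0) : ‖FF S D p - p.2‖ ≤ ‖p.1‖ * ε := by
  have hs := FP_sol h hh hr hμ
  rw [Prod.norm_def]
  refine max_le (hs.near h) ?_
  simp only [FF, Prod.snd_sub, add_sub_cancel_left, norm_smul]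
  exact mul_le_mul_of_nonneg_left (h.hp _ hs.1) (norm_nonneg _)

theorem FF_eq (h : GS S D ε) {x y : Ph d} {h0 : ℝ} (hh : 0 < h0)
    (hr : Metric.closedBall x (3 * h0) ⊆ D) (hμ : ε ≤ h0) (hm : (y.1, x.2) ∈ D)
    (h1 : x.1 = y.1 + qGrad d S (y.1, x.2)) (h2 : y.2 = x.2 + pGrad d S (y.1, x.2)) :
    FF S D (1, x) = y := by
  have hsol : Sol S D (1, x) y.1 := by
    refine ⟨hm, ?_⟩
    change x.1 = y.1 + (1 : ℂ) • qGrad d S (y.1, x.2)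
    rw [one_smul]; exact h1
  have hμ' : ‖((1 : ℂ), x).1‖ * ε ≤ h0 := by
    change ‖(1 : ℂ)‖ * ε ≤ h0
    rw [norm_one, one_mul]; exact hμ
  have : FP S D (1, x) = y.1 := FP_eq (p := ((1 : ℂ), x)) h hh hr hμ' hsol
  rw [FF, this]
  refine Prod.ext rfl ?_
  change x.2 + (1 : ℂ) • pGrad d S (y.1, x.2) = y.2
  rw [one_smul, h2]

theorem FP_analytic (h : GS S D ε) {p : ℂ × Ph d} {h0 : ℝ} (hh : 0 < h0)
    (hr : Metric.closedBall p.2 (4 * h0) ⊆ D) (hμ : ‖p.1‖ * ε ≤ h0) : AnalyticAt ℂ (FP S D) p := by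
  have hr3 : Metric.closedBall p.2 (3 * h0) ⊆ D := (Metric.closedBall_subset_closedBall (by linarith)).trans hr
  have hs := FP_sol h hh hr3 hμ
  set P := FP S D p with hPdef
  have hPn : ‖P - p.2.1‖ ≤ h0 := (hs.near h).trans hμ
  let Ψ : ℂ × Ph d → ℂ × Ph d := fun z => (z.1, (z.2.1 + z.1 • qGrad d S z.2, z.2.2))
  let a : ℂ × Ph d := (p.1, (P, p.2.2))
  have hqa : AnalyticAt ℂ (qGrad d S) a.2 := (grad_analytic (h.hS _ hs.1)).2
  have hΨ : AnalyticAt ℂ Ψ a := by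
    refine analyticAt_fst.prod (AnalyticAt.prod (AnalyticAt.add ?_ (analyticAt_fst.smul ?_)) ?_)
    · exact analyticAt_fst.comp analyticAt_snd
    · exact AnalyticAt.comp hqa analyticAt_snd
    · exact analyticAt_snd.comp analyticAt_snd
  have hΨa : Ψ a = p := by
    refine Prod.ext rfl (Prod.ext ?_ rfl)
    exact hs.2.symm
  have hQd := hqa.differentiableAt.hasFDerivAt
  have hder : HasFDerivAt Ψ ((ContinuousLinearMap.fst ℂ ℂ (Ph d)).prod
      (((ContinuousLinearMap.fst ℂ _ _).comp (ContinuousLinearMap.snd ℂ ℂ (Ph d)) +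
        (a.1 • ((fderiv ℂ (qGrad d S) a.2).comp (ContinuousLinearMap.snd ℂ ℂ (Ph d))) +
          (ContinuousLinearMap.fst ℂ ℂ (Ph d)).smulRight (qGrad d S a.2))).prod
        ((ContinuousLinearMap.snd ℂ _ _).comp (ContinuousLinearMap.snd ℂ ℂ (Ph d))))) a := by
    refine HasFDerivAt.prodMk hasFDerivAt_fst (HasFDerivAt.prodMk (HasFDerivAt.add ?_ ?_) ?_)
    · exact hasFDerivAt_fst.comp a hasFDerivAt_snd
    · exact HasFDerivAt.fun_smul hasFDerivAt_fst (hQd.comp a hasFDerivAt_snd)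
    · exact hasFDerivAt_snd.comp a hasFDerivAt_snd
  have hinj : ∀ v, fderiv ℂ Ψ a v = 0 → v = 0 := by
    intro v hv
    rw [hder.fderiv] at hv
    have v1 : v.1 = 0 := congrArg Prod.fst hv
    have v22 : v.2.2 = 0 := congrArg (fun z => z.2.2) hv
    have v21 : v.2.1 + (a.1 • fderiv ℂ (qGrad d S) a.2 v.2 + v.1 • qGrad d S a.2) = 0 :=
      congrArg (fun z => z.2.1) hv
    rw [v1, zero_smul, add_zero] at v21
    have hv2 : v.2 = (v.2.1, 0) := Prod.ext rfl v22
    have hsl : HasFDerivAt (fun P' : Fin d → ℂ => p.1 • qGrad d S (P', p.2.2))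
        (p.1 • ((fderiv ℂ (qGrad d S) a.2).comp (ContinuousLinearMap.inl ℂ _ _))) P :=
      (hQd.comp (x := P) (f := fun P' => (P', p.2.2)) (hasFDerivAt_prodMk_left P p.2.2)).const_smul p.1
    have hb := cauchy_fderiv (φ := fun P' => p.1 • qGrad d S (P', p.2.2)) (z := P) (ρ := 2 * h0) (M := h0)
      (by positivity) (fun w hw => (qslice h hr3 hμ w (by
        calc ‖w - p.2.1‖ = ‖(w - P) + (P - p.2.1)‖ := by congr 1; abel
          _ ≤ _ := norm_add_le _ _
          _ ≤ _ := by linarith)).1) (fun w hw => (qslice h hr3 hμ w (by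
        calc ‖w - p.2.1‖ = ‖(w - P) + (P - p.2.1)‖ := by congr 1; abel
          _ ≤ _ := norm_add_le _ _
          _ ≤ _ := by linarith)).2)
    rw [hsl.fderiv] at hb
    have hb2 := ContinuousLinearMap.le_of_opNorm_le _ hb v.2.1
    have e : (p.1 • ((fderiv ℂ (qGrad d S) a.2).comp (ContinuousLinearMap.inl ℂ _ _))) v.2.1 = - v.2.1 := by
      rw [eq_neg_iff_add_eq_zero, add_comm]
      rw [hv2] at v21
      exact v21
    rw [e, norm_neg, show h0 / (2 * h0) = 1 / 2 by field_simp] at hb2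
    have : v.2.1 = 0 := by
      have : ‖v.2.1‖ ≤ 0 := by linarith
      simpa using this
    exact Prod.ext v1 (Prod.ext this v22)
  obtain ⟨g, hg, hga, hgr⟩ := local_inv hΨ hinj
  rw [hΨa] at hg hga hgr
  have hg2 : AnalyticAt ℂ (fun z => (g z).2.1) p :=
    (analyticAt_fst.comp analyticAt_snd).comp hg
  refine hg2.congr ?_
  have ev1 : ∀ᶠ z in 𝓝 p, ‖(g z).2 - (P, p.2.2)‖ < h0 := by
    have : Tendsto (fun z => ‖(g z).2 - (P, p.2.2)‖) (𝓝 p) (𝓝 0) := by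
      have hc : ContinuousAt (fun z => ‖(g z).2 - (P, p.2.2)‖) p := by
        have := hg.continuousAt
        fun_prop
      have h3 := hc.tendsto
      simpa [hga, a] using h3
    exact this.eventually (gt_mem_nhds hh)
  have ev2 : ∀ᶠ z in 𝓝 p, ‖z.2 - p.2‖ < 7 / 10 * h0 := by
    have : Continuous fun z : ℂ × Ph d => ‖z.2 - p.2‖ := by fun_prop
    exact (this.tendsto' p 0 (by simp)).eventually (gt_mem_nhds (by positivity))
  have ev3 : ∀ᶠ z in 𝓝 p, ‖z.1‖ * ε < 11 / 10 * h0 := by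
    have : Continuous fun z : ℂ × Ph d => ‖z.1‖ * ε := by fun_prop
    exact (this.tendsto' p _ rfl).eventually (gt_mem_nhds (by linarith))
  filter_upwards [hgr, ev1, ev2, ev3] with z z0 z1 z2 z3
  symm
  refine FP_eq h (h0 := 11 / 10 * h0) (by positivity) ?_ z3.le ⟨?_, ?_⟩
  · refine (Metric.closedBall_subset_closedBall' ?_).trans hr
    rw [dist_eq_norm]; linarith
  · have hz22 : (g z).2.2 = z.2.2 := congrArg (fun u => u.2.2) z0
    rw [← hz22]
    apply mem_room hr
    · have := (norm_fst_le _).trans z1.le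
      simp only [Prod.fst_sub] at this
      calc ‖(g z).2.1 - p.2.1‖ = ‖((g z).2.1 - P) + (P - p.2.1)‖ := by congr 1; abel
        _ ≤ _ := norm_add_le _ _
        _ ≤ _ := by linarith
    · have := (norm_snd_le _).trans z1.le
      simp only [Prod.snd_sub] at this
      simp only
      linarith
  · have hz1 : (g z).1 = z.1 := congrArg (fun u => u.1) z0
    have hz22 : (g z).2.2 = z.2.2 := congrArg (fun u => u.2.2) z0
    have hz21 : (g z).2.1 + (g z).1 • qGrad d S (g z).2 = z.2.1 := congrArg (fun u => u.2.1) z0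
    rw [← hz21, hz1, ← hz22]

theorem FF_analytic (h : GS S D ε) {p : ℂ × Ph d} {h0 : ℝ} (hh : 0 < h0)
    (hr : Metric.closedBall p.2 (4 * h0) ⊆ D) (hμ : ‖p.1‖ * ε ≤ h0) :
    AnalyticAt ℂ (FF S D) p ∧ AnalyticAt ℂ (AF S D) p := by
  have hP := FP_analytic h hh hr hμ
  have hs := FP_sol h hh ((Metric.closedBall_subset_closedBall (by linarith)).trans hr) hμ
  have hz : AnalyticAt ℂ (fun p : ℂ × Ph d => ((FP S D p, p.2.2) : Ph d)) p :=
    hP.prod (analyticAt_snd.comp analyticAt_snd)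
  have hpg : AnalyticAt ℂ (fun p : ℂ × Ph d => pGrad d S (FP S D p, p.2.2)) p :=
    AnalyticAt.fun_comp (grad_analytic (h.hS _ hs.1)).1 hz
  constructor
  · exact hP.prod ((analyticAt_snd.comp analyticAt_snd).add (analyticAt_fst.smul hpg))
  · refine analyticAt_fst.mul (AnalyticAt.sub (Finset.analyticAt_fun_sum _ fun i _ => ?_) ?_)
    · exact (((ContinuousLinearMap.proj (R := ℂ) (φ := fun _ : Fin d => ℂ) i).analyticAt _).comp hP).mul
        (((ContinuousLinearMap.proj (R := ℂ) (φ := fun _ : Fin d => ℂ) i).analyticAt _).comp hpg)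
    · exact AnalyticAt.fun_comp (h.hS _ hs.1) hz

theorem one_form (h : GS S D ε) {p : ℂ × Ph d} {h0 : ℝ} (hh : 0 < h0)
    (hr : Metric.closedBall p.2 (4 * h0) ⊆ D) (hμ : ‖p.1‖ * ε ≤ h0) (v : Ph d) :
    ∑ i, (FF S D p).1 i * (fderiv ℂ (fun y => FF S D (p.1, y)) p.2 v).2 i - ∑ i, p.2.1 i * v.2 i
      = fderiv ℂ (fun y => AF S D (p.1, y)) p.2 v := by
  have hP : DifferentiableAt ℂ (FP S D) (p.1, p.2) := (FP_analytic h hh hr hμ).differentiableAt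
  have hs := FP_sol h hh ((Metric.closedBall_subset_closedBall (by linarith)).trans hr) hμ
  have hPs : DifferentiableAt ℂ (fun y => FP S D (p.1, y)) p.2 := by fun_prop
  set P' := fderiv ℂ (fun y => FP S D (p.1, y)) p.2 with hP'
  set z : Ph d := (FP S D p, p.2.2) with hz
  have hzd : HasFDerivAt (fun y : Ph d => ((FP S D (p.1, y), y.2) : Ph d))
      (P'.prod (ContinuousLinearMap.snd ℂ _ _)) p.2 := hPs.hasFDerivAt.prodMk hasFDerivAt_snd
  have hpg := (grad_analytic (h.hS _ hs.1)).1.differentiableAt.hasFDerivAt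
  have hpd := hpg.comp (x := p.2) (f := fun y : Ph d => ((FP S D (p.1, y), y.2) : Ph d)) hzd
  have hSd := (h.hS _ hs.1).differentiableAt.hasFDerivAt.comp (x := p.2)
    (f := fun y : Ph d => ((FP S D (p.1, y), y.2) : Ph d)) hzd
  have hFd : HasFDerivAt (fun y => FF S D (p.1, y)) _ p.2 :=
    hPs.hasFDerivAt.prodMk ((hasFDerivAt_snd (𝕜 := ℂ) (p := p.2)).add (hpd.const_smul p.1))
  have hci : ∀ i : Fin d, HasFDerivAt (fun y => FP S D (p.1, y) i * pGrad d S (FP S D (p.1, y), y.2) i) _ p.2 :=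
    fun i => (((ContinuousLinearMap.proj (R := ℂ) (φ := fun _ : Fin d => ℂ) i).hasFDerivAt).comp p.2
      hPs.hasFDerivAt).mul (((ContinuousLinearMap.proj (R := ℂ) (φ := fun _ : Fin d => ℂ) i).hasFDerivAt).comp p.2 hpd)
  have hAd : HasFDerivAt (fun y => AF S D (p.1, y)) _ p.2 :=
    ((HasFDerivAt.fun_sum fun i (_ : i ∈ Finset.univ) => hci i).sub hSd).const_mul p.1
  rw [hFd.fderiv, hAd.fderiv]
  have hy : ∀ i, p.2.1 i = FP S D p i + p.1 * qGrad d S z i := fun i => congrFun hs.2 i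
  have hS' : fderiv ℂ S z (P' v, v.2) = _ := fderiv_eq_grad (S := S) z (P' v, v.2)
  set W := fderiv ℂ (pGrad d S) z (P' v, v.2) with hW
  have lhs : ∀ i, (FF S D p).1 i * (v.2 i + p.1 * W i) - (FP S D p i + p.1 * qGrad d S z i) * v.2 i =
     p.1 * (FP S D p i * W i) - p.1 * (qGrad d S z i * v.2 i) := by
    intro i
    simp only [FF]
    ring
  have L1 : ∑ i, (FF S D p).1 i * (v.2 i + p.1 * W i) - ∑ i, p.2.1 i * v.2 i =
      p.1 * (∑ i, (FP S D p i * W i + pGrad d S z i * P' v i) - fderiv ℂ S z (P' v, v.2)) := by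
    rw [hS', ← Finset.sum_sub_distrib]
    simp only [hy, lhs]
    rw [Finset.sum_add_distrib, Finset.sum_sub_distrib, ← Finset.mul_sum, ← Finset.mul_sum]
    ring
  refine Eq.trans ?_ (L1.trans ?_)
  · rfl
  · rw [_root_.smul_apply, _root_.sub_apply, _root_.sum_apply]
    rfl

theorem fam_of_room (h : GS S D ε) {x : Ph d} {r : ℝ} (hr0 : 0 < r) (hr : Metric.closedBall x r ⊆ D) :
    Fam (FF S D) (AF S D) x := by
  have hx := FF_analytic h (p := (0, x)) (h0 := r / 4) (by positivity)
    (by convert hr using 2; ring) (by simp; positivity)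
  refine ⟨hx.1, hx.2, ?_, ?_, FF_zero x, ?_⟩
  · exact isBigO_fst (hx.1.sub analyticAt_snd) (Eventually.of_forall fun y => by simp [FF_zero])
  · exact isBigO_fst hx.2 (Eventually.of_forall fun y => by simp [AF])
  · have ev2 : ∀ᶠ z in 𝓝 ((0 : ℂ), x), ‖z.2 - x‖ < r / 2 := by
      have : Continuous fun z : ℂ × Ph d => ‖z.2 - x‖ := by fun_prop
      exact (this.tendsto' (0, x) 0 (by simp)).eventually (gt_mem_nhds (by positivity))
    have ev3 : ∀ᶠ z in 𝓝 ((0 : ℂ), x), ‖z.1‖ * ε < r / 8 := by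
      have : Continuous fun z : ℂ × Ph d => ‖z.1‖ * ε := by fun_prop
      exact (this.tendsto' (0, x) 0 (by simp)).eventually (gt_mem_nhds (by positivity))
    filter_upwards [ev2, ev3] with p h2 h3 v
    refine one_form h (h0 := r / 8) (by positivity) ?_ h3.le v
    refine (Metric.closedBall_subset_closedBall' ?_).trans hr
    rw [dist_eq_norm]; linarith

end fam
end Emb
end

section

open Filter Topology Asymptotics

namespace Emb

section bounds
variable {d : ℕ} {S : Ph d → ℂ} {D : Set (Ph d)} {ε : ℝ}

theorem room_mono {y z : Ph d} {r s : ℝ} (hr : Metric.closedBall y r ⊆ D) (h : s + ‖z - y‖ ≤ r) :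
    Metric.closedBall z s ⊆ D :=
  (Metric.closedBall_subset_closedBall' (by rw [dist_eq_norm]; exact h)).trans hr

theorem lemA (h : GS S D ε) {h0 : ℝ} (hh : 0 < h0) (k : ℕ) : ∀ p : ℂ × Ph d, ‖p.1‖ * ε ≤ h0 →
    Metric.closedBall p.2 ((3 * k + 4) * h0) ⊆ D →
    AnalyticAt ℂ (dl (FF S D) Prod.snd (k + 1)) p ∧
      ‖dl (FF S D) Prod.snd (k + 1) p‖ ≤ ‖p.1‖ * ε * (1 / 2) ^ k := by
  induction k with
  | zero =>
    intro p hμ hr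
    have hr4 : Metric.closedBall p.2 (4 * h0) ⊆ D := by simpa using hr
    constructor
    · exact (FF_analytic h hh hr4 hμ).1.sub analyticAt_snd
    · have hn := FF_near h hh (room_mono hr4 (by simp; linarith)) hμ
      rw [pow_zero, mul_one]
      exact hn
  | succ k ih =>
    intro p hμ hr
    have hk : (0 : ℝ) ≤ k := Nat.cast_nonneg k
    have hkh : 0 ≤ (k : ℝ) * h0 := by positivity
    push_cast at hr
    have hr4 : Metric.closedBall p.2 (4 * h0) ⊆ D := room_mono hr (by simp; nlinarith)
    have hn := FF_near h hh (room_mono hr4 (by simp; linarith)) hμ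
    have key : ∀ w : Ph d, ‖w - p.2‖ ≤ h0 + 2 * h0 →
        AnalyticAt ℂ (dl (FF S D) Prod.snd (k + 1)) (p.1, w) ∧
        ‖dl (FF S D) Prod.snd (k + 1) (p.1, w)‖ ≤ ‖p.1‖ * ε * (1 / 2) ^ k := by
      intro w hw
      exact ih (p.1, w) hμ (room_mono hr (by nlinarith))
    constructor
    · refine AnalyticAt.sub (AnalyticAt.fun_comp (key _ (hn.trans (by linarith))).1
        (stp_analytic (FF_analytic h hh hr4 hμ).1)) (key p.2 (by simp; linarith)).1
    · have := cauchy_lip (φ := fun y => dl (FF S D) Prod.snd (k + 1) (p.1, y)) (y := p.2) (r := h0)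
        (ρ := 2 * h0) (M := ‖p.1‖ * ε * (1 / 2) ^ k) (by positivity)
        (fun w hw => by have := (key w hw).1.differentiableAt; fun_prop)
        (fun w hw => (key w hw).2) (a := p.2) (b := FF S D p) (by simpa using hh.le) (hn.trans hμ)
      refine this.trans ?_
      have hε := h.hε
      calc _ ≤ ‖p.1‖ * ε * (1 / 2) ^ k / (2 * h0) * h0 := by gcongr; exact hn.trans hμ
        _ = _ := by rw [pow_succ]; field_simp

theorem sum_half (m : ℕ) : ∑ k ∈ Finset.Icc 1 m, ((1 : ℝ) / 2) ^ (k - 1) ≤ 2 := by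
  have : ∀ m : ℕ, ∑ k ∈ Finset.Icc 1 m, ((1 : ℝ) / 2) ^ (k - 1) = 2 - 2 * (1 / 2) ^ m := by
    intro m
    induction m with
    | zero => simp
    | succ m ih =>
      rw [Finset.sum_Icc_succ_top (by omega), ih, pow_succ]; simp; ring
  rw [this]
  have : (0 : ℝ) ≤ (1 / 2) ^ m := by positivity
  linarith

theorem lemA' (h : GS S D ε) {h0 : ℝ} (hh : 0 < h0) {m : ℕ} {p : ℂ × Ph d} (hμ : ‖p.1‖ * ε ≤ h0)
    (hr : Metric.closedBall p.2 ((3 * m + 1) * h0) ⊆ D) {k : ℕ} (hk : k ∈ Finset.Icc 1 m) :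
    AnalyticAt ℂ (dl (FF S D) Prod.snd k) p ∧
      ‖dl (FF S D) Prod.snd k p‖ ≤ ‖p.1‖ * ε * (1 / 2) ^ (k - 1) := by
  rw [Finset.mem_Icc] at hk
  obtain ⟨j, rfl⟩ := Nat.exists_eq_add_of_le' hk.1
  refine lemA h hh j p hμ (room_mono hr ?_)
  have : (j : ℝ) + 1 ≤ m := by exact_mod_cast hk.2
  simp
  nlinarith

theorem norm_coef (k : ℕ) : ‖(-1 : ℂ) ^ (k - 1) / (k : ℂ)‖ ≤ 1 := by
  rw [norm_div, norm_pow, norm_neg, norm_one, one_pow, Complex.norm_natCast]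
  rcases k with _ | k
  · simp
  · rw [div_le_one (by positivity)]; push_cast; linarith [Nat.cast_nonneg (α := ℝ) k]

theorem sum_bound {W : Type*} [NormedAddCommGroup W] [NormedSpace ℂ W] {m : ℕ} {c : ℕ → ℂ} {a : ℕ → W} {C : ℝ}
    (hC : 0 ≤ C) (hc : ∀ k ∈ Finset.Icc 1 m, ‖c k‖ ≤ 1)
    (ha : ∀ k ∈ Finset.Icc 1 m, ‖a k‖ ≤ C * (1 / 2) ^ (k - 1)) :
    ‖∑ k ∈ Finset.Icc 1 m, c k • a k‖ ≤ 2 * C := by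
  refine (norm_sum_le _ _).trans ?_
  calc _ ≤ ∑ k ∈ Finset.Icc 1 m, C * (1 / 2) ^ (k - 1) := by
        refine Finset.sum_le_sum fun k hk => ?_
        rw [norm_smul]
        calc _ ≤ 1 * (C * (1 / 2) ^ (k - 1)) := mul_le_mul (hc k hk) (ha k hk) (norm_nonneg _) zero_le_one
          _ = _ := one_mul _
    _ = C * ∑ k ∈ Finset.Icc 1 m, (1 / 2) ^ (k - 1) := by rw [Finset.mul_sum]
    _ ≤ C * 2 := by gcongr; exact sum_half m
    _ = _ := mul_comm _ _

theorem XF_bound (h : GS S D ε) {h0 : ℝ} (hh : 0 < h0) {m : ℕ} {p : ℂ × Ph d} (hμ : ‖p.1‖ * ε ≤ h0)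
    (hr : Metric.closedBall p.2 ((3 * m + 1) * h0) ⊆ D) :
    AnalyticAt ℂ (XF (FF S D) m) p ∧ ‖XF (FF S D) m p‖ ≤ 2 * (‖p.1‖ * ε) := by
  have hε := h.hε
  constructor
  · have e : XF (FF S D) m = fun p => ∑ k ∈ Finset.Icc 1 m,
      ((-1 : ℂ) ^ (k - 1) / (k : ℂ)) • dl (FF S D) Prod.snd k p := rfl
    rw [e]
    refine Finset.analyticAt_fun_sum _ fun k hk => ?_
    have hk1 := (lemA' h hh hμ hr hk).1
    exact AnalyticAt.const_smul (c := ((-1 : ℂ) ^ (k - 1) / (k : ℂ))) hk1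
  · exact sum_bound (by positivity) (fun k _ => norm_coef k) (fun k hk => (lemA' h hh hμ hr hk).2)

theorem GF_split {F : ℂ × Ph d → Ph d} {x : Ph d} (m : ℕ) (t μ : ℂ) :
    GF F x m t μ - x = ∑ k ∈ Finset.Icc 1 m, (bp k).eval t • dl F Prod.snd k (μ, x) := by
  have := range_eq_Icc m (fun k => if k = 0 then 0 else (bp k).eval t • dl F Prod.snd k (μ, x)) (by simp)
  rw [Finset.sum_range_succ'] at this
  rw [GF, Finset.sum_range_succ']
  simp only [Nat.add_eq_zero_iff, one_ne_zero, and_false, if_false, if_true, add_zero] at this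
  rw [this]
  simp only [bp, dl, Polynomial.eval_one, one_smul, add_sub_cancel_right]
  refine Finset.sum_congr rfl fun k hk => ?_
  rw [if_neg (by simp at hk; omega)]

theorem GF'_split {F : ℂ × Ph d → Ph d} {x : Ph d} (m : ℕ) (t μ : ℂ) :
    GF' F x m t μ = ∑ k ∈ Finset.Icc 1 m, (bp k).derivative.eval t • dl F Prod.snd k (μ, x) := by
  rw [GF', range_eq_Icc]
  simp [bp]

theorem bp_bounds' {k : ℕ} (hk : 1 ≤ k) {t : ℝ} (h0 : 0 ≤ t) (h1 : t ≤ 1) :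
    ‖(bp k).eval (t : ℂ)‖ ≤ 1 ∧ ‖(bp k).derivative.eval (t : ℂ)‖ ≤ 1 := by
  obtain ⟨j, rfl⟩ := Nat.exists_eq_add_of_le' hk
  have hj : (0 : ℝ) ≤ j := Nat.cast_nonneg j
  obtain ⟨b1, b2⟩ := bp_bounds j t h0 h1
  constructor
  · refine b1.trans ?_
    rw [div_le_one (by positivity)]; linarith
  · refine b2.trans ?_
    rw [div_le_one (by positivity)]; linarith

theorem GF_bound (h : GS S D ε) {h0 : ℝ} (hh : 0 < h0) {m : ℕ} {μ : ℂ} {x : Ph d} (hμ : ‖μ‖ * ε ≤ h0)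
    (hr : Metric.closedBall x ((3 * m + 1) * h0) ⊆ D) {t : ℝ} (t0 : 0 ≤ t) (t1 : t ≤ 1) :
    ‖GF (FF S D) x m t μ - x‖ ≤ 2 * (‖μ‖ * ε) ∧ ‖GF' (FF S D) x m t μ‖ ≤ 2 * (‖μ‖ * ε) ∧
    AnalyticAt ℂ (fun μ => GF (FF S D) x m t μ) μ ∧ AnalyticAt ℂ (fun μ => GF' (FF S D) x m t μ) μ := by
  have hε := h.hε
  have han : ∀ k ∈ Finset.range (m + 1), AnalyticAt ℂ (fun μ => dl (FF S D) Prod.snd k (μ, x)) μ := by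
    intro k hk
    rcases k with _ | k
    · exact analyticAt_const
    · exact AnalyticAt.fun_comp (g := dl (FF S D) Prod.snd (k + 1)) (f := fun μ : ℂ => (μ, x))
        (lemA' h hh (p := (μ, x)) hμ hr (by simp at hk ⊢; omega)).1 (analyticAt_id.prod analyticAt_const)
  refine ⟨?_, ?_, ?_, ?_⟩
  · rw [GF_split]
    exact sum_bound (by positivity) (fun k hk => (bp_bounds' (Finset.mem_Icc.1 hk).1 t0 t1).1)
      (fun k hk => (lemA' h hh (p := (μ, x)) hμ hr hk).2)
  · rw [GF'_split]
    exact sum_bound (by positivity) (fun k hk => (bp_bounds' (Finset.mem_Icc.1 hk).1 t0 t1).2)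
      (fun k hk => (lemA' h hh (p := (μ, x)) hμ hr hk).2)
  · exact Finset.analyticAt_fun_sum _ fun k hk => AnalyticAt.const_smul (c := (bp k).eval (t : ℂ)) (han k hk)
  · exact Finset.analyticAt_fun_sum _ fun k hk =>
      AnalyticAt.const_smul (c := (bp k).derivative.eval (t : ℂ)) (han k hk)

theorem slice_data (h : GS S D ε) {R : ℝ} (hR : 0 < R) {m : ℕ} {x : Ph d}
    (hr : Metric.closedBall x ((3 * m + 1) * (R * ε)) ⊆ D) (μ : ℂ) (hμ : ‖μ‖ ≤ R) :
    DifferentiableAt ℂ (fun μ => XF (FF S D) m (μ, x)) μ ∧ ‖XF (FF S D) m (μ, x)‖ ≤ 2 * (R * ε) := by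
  have hε := h.hε
  have hμ' : ‖μ‖ * ε ≤ R * ε := by gcongr
  obtain ⟨h1, h2⟩ := XF_bound h (h0 := R * ε) (by positivity) (p := (μ, x)) hμ' hr
  refine ⟨?_, h2.trans (by simpa using hμ')⟩
  have := h1.differentiableAt
  fun_prop

/-- first estimate -/
theorem est_tail (h : GS S D ε) {R : ℝ} (hR : 1 < R) {m : ℕ} {x : Ph d}
    (hr : Metric.closedBall x ((3 * m + 1) * (R * ε)) ⊆ D) :
    ‖XF (FF S D) m (1, x) - XH (FF S D) m x‖ ≤ 2 * (R * ε) / R ^ (m + 1) / (1 - 1 / R) :=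
  norm_sub_tc_le hR (fun z hz => (slice_data h (by linarith) hr z hz).1)
    (fun z hz => (slice_data h (by linarith) hr z hz).2) (m + 1)

theorem tc_zero_XF (h : GS S D ε) {R : ℝ} (hR : 0 < R) {m : ℕ} {x : Ph d}
    (hr : Metric.closedBall x ((3 * m + 1) * (R * ε)) ⊆ D) :
    tc 0 (fun μ => XF (FF S D) m (μ, x)) = 0 := by
  have hε := h.hε
  have := (XF_bound h (h0 := R * ε) (by positivity) (p := (0, x)) (by simp; positivity) hr).2
  simpa [tc] using this

theorem est_size (h : GS S D ε) {R : ℝ} (hR : 2 ≤ R) {m : ℕ} {x : Ph d}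
    (hr : Metric.closedBall x ((3 * m + 1) * (R * ε)) ⊆ D) : ‖XH (FF S D) m x‖ ≤ 4 * ε := by
  have hε := h.hε
  rw [XH, range_eq_Icc _ _ (tc_zero_XF h (by linarith) hr)]
  have := sum_bound (m := m) (c := fun _ => 1) (a := fun j => tc j (fun μ => XF (FF S D) m (μ, x)))
    (C := 2 * ε) (by positivity) (by simp) (fun k hk => ?_)
  · simp only [one_smul] at this
    linarith
  · refine (norm_tc_le (by linarith) (fun z hz => (slice_data h (by linarith) hr z hz).1)
      (fun z hz => (slice_data h (by linarith) hr z hz).2) k).trans ?_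
    obtain ⟨j, rfl⟩ := Nat.exists_eq_add_of_le' (Finset.mem_Icc.1 hk).1
    rw [Nat.add_sub_cancel, pow_succ, one_div, inv_pow]
    have hRj : (2 : ℝ) ^ j ≤ R ^ j := by gcongr
    have hR0 : 0 < R := by linarith
    calc _ = 2 * ε * (R ^ j)⁻¹ := by field_simp
      _ ≤ _ := by gcongr

theorem tc_XF_stable {F : ℂ × Ph d → Ph d} {A : ℂ × Ph d → ℂ} {x : Ph d} (h : Fam F A x) {j m : ℕ} (hj : j ≤ m) :
    tc j (fun μ => XF F m (μ, x)) = tc j (fun μ => XF F j (μ, x)) := by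
  refine tc_eq_of_isBigO (n := j + 1) (h.XF_slice m) (h.XF_slice j) ?_ (by omega)
  have : ∀ μ, XF F m (μ, x) - XF F j (μ, x) =
      ∑ k ∈ Finset.Ioc j m, ((-1 : ℂ) ^ (k - 1) / (k : ℂ)) • dl F Prod.snd k (μ, x) := by
    intro μ
    simp only [XF, lg]
    rw [sub_eq_iff_eq_add', ← Finset.sum_union]
    · congr 1; ext k; simp; omega
    · rw [Finset.disjoint_left]; intro k; simp; omega
  simp only [this]
  refine IsBigO.fun_sum fun k hk => ?_
  have := (slice_order (h.dlS_order k)).trans (pow_isBigO (show j + 1 ≤ k by simp at hk; omega))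
  exact this.const_smul_left ((-1 : ℂ) ^ (k - 1) / (k : ℂ))

theorem tc_one_XF (h : GS S D ε) {x : Ph d} {r : ℝ} (hr0 : 0 < r) (hr : Metric.closedBall x r ⊆ D) {m : ℕ}
    (hm : 1 ≤ m) : tc 1 (fun μ => XF (FF S D) m (μ, x)) = hamVF d S x := by
  have hε := h.hε
  rw [tc_XF_stable (fam_of_room h hr0 hr) hm]
  have hx : x ∈ D := hr (Metric.mem_closedBall_self hr0.le)
  have hPa : AnalyticAt ℂ (FP S D) (0, x) := FP_analytic h (p := (0, x)) (h0 := r / 4) (by positivity)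
    (by convert hr using 2; ring) (by simp; positivity)
  have hP0 : FP S D (0, x) = x.1 := congrArg Prod.fst (FF_zero (S := S) (D := D) x)
  have hzd : DifferentiableAt ℂ (fun μ : ℂ => ((FP S D (μ, x), x.2) : Ph d)) 0 := by
    have : DifferentiableAt ℂ (FP S D) ((0 : ℂ), x) := hPa.differentiableAt
    fun_prop
  have hgr := grad_analytic (h.hS _ hx)
  have hham : DifferentiableAt ℂ (hamVF d S) x :=
    (hgr.2.neg.prod hgr.1).differentiableAt
  have hu : DifferentiableAt ℂ (fun μ : ℂ => hamVF d S (FP S D (μ, x), x.2)) 0 := by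
    refine DifferentiableAt.fun_comp' (g := hamVF d S) (f := fun μ : ℂ => ((FP S D (μ, x), x.2) : Ph d)) 0 ?_ hzd
    simp only [hP0]; exact hham
  have hd := (hasDerivAt_id (0 : ℂ)).smul hu.hasDerivAt
  have he : (fun μ => XF (FF S D) 1 (μ, x)) =ᶠ[𝓝 0]
      ((id : ℂ → ℂ) • fun μ : ℂ => hamVF d S (FP S D (μ, x), x.2)) := by
    have ev3 : ∀ᶠ z : ℂ in 𝓝 0, ‖z‖ * ε < r / 3 := by
      have : Continuous fun z : ℂ => ‖z‖ * ε := by fun_prop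
      exact (this.tendsto' 0 0 (by simp)).eventually (gt_mem_nhds (by positivity))
    filter_upwards [ev3] with μ hμ
    have hs := FP_sol h (p := (μ, x)) (h0 := r / 3) (by positivity)
      (by convert hr using 2; ring) hμ.le
    simp only [XF, lg, Finset.Icc_self, Finset.sum_singleton, Pi.smul_apply', id, dl, stp]
    have h1 : x.1 = FP S D (μ, x) + μ • qGrad d S (FP S D (μ, x), x.2) := hs.2
    refine Prod.ext ?_ ?_
    · simp only [FF, hamVF, Prod.smul_fst, Prod.fst_sub, smul_neg]
      rw [eq_neg_iff_add_eq_zero]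
      have h2 : FP S D (μ, x) - x.1 + μ • qGrad d S (FP S D (μ, x), x.2) = 0 := by
        rw [sub_add_eq_add_sub, ← h1, sub_self]
      simpa using h2
    · simp [FF, hamVF]
  rw [tc, iteratedDeriv_one, he.deriv_eq, hd.deriv]
  simp [hP0]

theorem sum_arith (n : ℕ) : ∑ i ∈ Finset.range n, (3 * (i : ℝ) + 7) * (1 / 2) ^ i ≤ 20 := by
  have : ∀ n : ℕ, ∑ i ∈ Finset.range n, (3 * (i : ℝ) + 7) * (1 / 2) ^ i = 20 - (6 * n + 20) * (1 / 2) ^ n := by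
    intro n
    induction n with
    | zero => simp
    | succ n ih => rw [Finset.sum_range_succ, ih, pow_succ]; push_cast; ring
  rw [this]
  have : (0 : ℝ) ≤ (6 * n + 20) * (1 / 2) ^ n := by positivity
  linarith

/-- fourth estimate -/
theorem est_ham (h : GS S D ε) {x : Ph d} {r : ℝ} (hr0 : 0 < r) (hr : Metric.closedBall x r ⊆ D) {m : ℕ}
    (hm : 1 ≤ m) (hmr : (3 * m + 1) * (2 * ε) ≤ r) :
    ‖XH (FF S D) m x - hamVF d S x‖ ≤ 40 * ε ^ 2 / r := by
  have hε := h.hε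
  have hfam := fam_of_room h hr0 hr
  obtain ⟨n, rfl⟩ := Nat.exists_eq_add_of_le' hm
  have h0 := tc_zero_XF h (R := 2) (m := n + 1) (x := x) (by norm_num) (room_mono hr (by simpa using hmr))
  have h1 := tc_one_XF h hr0 hr hm
  rw [XH, Finset.sum_range_succ', Finset.sum_range_succ', h0, zero_add, h1]
  simp only [add_zero, add_sub_cancel_right]
  have hb : ∀ i ∈ Finset.range n, ‖tc (i + 1 + 1) (fun μ => XF (FF S D) (n + 1) (μ, x))‖ ≤
      2 * ε ^ 2 / r * ((3 * (i : ℝ) + 7) * (1 / 2) ^ i) := by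
    intro i hi
    rw [tc_XF_stable hfam (by simp at hi; omega)]
    set R := r / ((3 * (i : ℝ) + 7) * ε) with hR
    have hR0 : 0 < R := by positivity
    have hroom : Metric.closedBall x ((3 * ((i + 1 + 1 : ℕ) : ℝ) + 1) * (R * ε)) ⊆ D := by
      convert hr using 2
      rw [hR]; push_cast
      field_simp
      ring
    have hR2 : 2 ≤ R := by
      rw [hR, le_div_iff₀ (by positivity)]
      refine le_trans ?_ hmr
      have : (i : ℝ) + 1 ≤ n := by have : i + 1 ≤ n := by simpa using hi
                                   exact_mod_cast this
      push_cast
      nlinarith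
    refine (norm_tc_le hR0 (fun z hz => (slice_data h hR0 hroom z hz).1)
      (fun z hz => (slice_data h hR0 hroom z hz).2) _).trans ?_
    have e1 : 2 * (R * ε) / R ^ (i + 1 + 1) = 2 * ε / R * (1 / R) ^ i := by
      rw [pow_succ, pow_succ, one_div, inv_pow]; field_simp
    have e2 : 2 * ε / R = 2 * ε ^ 2 / r * (3 * (i : ℝ) + 7) := by
      rw [hR]; field_simp
    rw [e1, e2]
    have e3 : 1 / R ≤ 1 / 2 := one_div_le_one_div_of_le (by norm_num) hR2
    have e4 : (1 / R) ^ i ≤ (1 / 2) ^ i := by gcongr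
    calc _ ≤ 2 * ε ^ 2 / r * (3 * (i : ℝ) + 7) * (1 / 2) ^ i := by gcongr
      _ = _ := by ring
  refine (norm_sum_le_of_le _ hb).trans ?_
  rw [← Finset.mul_sum]
  calc _ ≤ 2 * ε ^ 2 / r * 20 := by gcongr; exact sum_arith n
    _ = _ := by ring

/-- residual estimate -/
theorem est_residual (h : GS S D ε) {R : ℝ} (hR : 1 < R) {m : ℕ} {x : Ph d}
    (hr : Metric.closedBall x ((3 * m + 1) * (R * ε) + 2 * (R * ε)) ⊆ D) {t : ℝ} (t0 : 0 ≤ t) (t1 : t ≤ 1) :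
    ‖GF' (FF S D) x m t 1 - XF (FF S D) m (1, GF (FF S D) x m t 1)‖ ≤
      4 * (R * ε) / R ^ (m + 1) / (1 - 1 / R) := by
  have hε := h.hε
  have hR0 : 0 < R := by linarith
  have hfam := fam_of_room h (r := (3 * m + 1) * (R * ε) + 2 * (R * ε)) (by positivity) hr
  let g : ℂ → Ph d := fun μ => GF' (FF S D) x m t μ - XF (FF S D) m (μ, GF (FF S D) x m t μ)
  have hroom : Metric.closedBall x ((3 * m + 1) * (R * ε)) ⊆ D := room_mono hr (by simp; positivity)
  have hg : ∀ z : ℂ, ‖z‖ ≤ R → AnalyticAt ℂ g z ∧ ‖g z‖ ≤ 4 * (R * ε) := by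
    intro z hz
    have hz' : ‖z‖ * ε ≤ R * ε := by gcongr
    obtain ⟨g1, g2, g3, g4⟩ := GF_bound h (h0 := R * ε) (by positivity) hz' hroom t0 t1
    obtain ⟨x1, x2⟩ := XF_bound h (h0 := R * ε) (by positivity) (m := m)
      (p := (z, GF (FF S D) x m t z)) hz' (room_mono hr (by linarith))
    constructor
    · exact g4.sub (AnalyticAt.fun_comp (g := XF (FF S D) m)
        (f := fun μ => (μ, GF (FF S D) x m t μ)) x1 (analyticAt_id.prod g3))
    · refine (norm_sub_le _ _).trans ?_
      simp only at x2
      linarith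
  have key := norm_sub_tc_le hR (fun z hz => (hg z hz).1.differentiableAt) (fun z hz => (hg z hz).2) (m + 1)
  have hz : ∑ j ∈ Finset.range (m + 1), tc j g = 0 := by
    refine Finset.sum_eq_zero fun j hj => ?_
    exact tc_eq_zero (hg 0 (by simp; linarith)).1 (hfam.residual m t) (by simpa using hj)
  rw [hz, sub_zero] at key
  exact key

end bounds
end Emb
end

section

open Filter Topology Asymptotics

namespace Emb

section flow
open scoped NNReal
variable {E : Type*} [NormedAddCommGroup E] [NormedSpace ℝ E] [CompleteSpace E]

theorem picard_mem {v : E → E} {tmin tmax : ℝ} {t₀ : Set.Icc tmin tmax} {x : E} {a L K : ℝ≥0}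
    (hf : IsPicardLindelof (fun _ => v) t₀ x a 0 L K) :
    ∃ α : ℝ → E, α t₀ = x ∧ (∀ t, α t ∈ Metric.closedBall x a) ∧
      ∀ t ∈ Set.Icc tmin tmax, HasDerivWithinAt α (v (α t)) (Set.Icc tmin tmax) t := by
  have hx : x ∈ Metric.closedBall x ((0 : ℝ≥0) : ℝ) := Metric.mem_closedBall_self le_rfl
  obtain ⟨α, hα⟩ := ODE.FunSpace.exists_isFixedPt_next hf hx
  refine ⟨α.compProj, by rw [ODE.FunSpace.compProj_val, ← hα, ODE.FunSpace.next_apply₀],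
    fun t => α.compProj_mem_closedBall hf.mul_max_le, fun t ht ↦ ?_⟩
  apply ODE.hasDerivWithinAt_picard_Icc t₀.2 hf.continuousOn_uncurry
    α.continuous_compProj.continuousOn (fun _ ht' ↦ α.compProj_mem_closedBall hf.mul_max_le)
    x ht |>.congr_of_mem _ ht
  intro t' ht'
  nth_rw 1 [← hα]
  rw [ODE.FunSpace.compProj_of_mem ht', ODE.FunSpace.next_apply]

theorem flow_exists {v : E → E} {x : E} {L K : ℝ≥0}
    (hb : ∀ y ∈ Metric.closedBall x (2 * L), ‖v y‖ ≤ L)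
    (hl : LipschitzOnWith K v (Metric.closedBall x (2 * L))) :
    ∃ γ : ℝ → E, γ 0 = x ∧ ∀ t ∈ Set.Icc (0 : ℝ) 1, ‖γ t - x‖ ≤ L ∧ HasDerivAt γ (v (γ t)) t := by
  have h0 : (0 : ℝ) ∈ Set.Icc (-1 : ℝ) 2 := by constructor <;> norm_num
  have hpl : IsPicardLindelof (fun _ => v) (⟨0, h0⟩ : Set.Icc (-1 : ℝ) 2) x (2 * L) 0 L K := by
    refine IsPicardLindelof.of_time_independent (by simpa using hb) (by simpa using hl) ?_
    simp
    linarith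
  obtain ⟨γ, g0, g1, g2⟩ := picard_mem hpl
  have hd : ∀ t ∈ Set.Icc (0 : ℝ) 1, HasDerivAt γ (v (γ t)) t := fun t ht =>
    (g2 t ⟨by linarith [ht.1], by linarith [ht.2]⟩).hasDerivAt
      (Icc_mem_nhds (by linarith [ht.1]) (by linarith [ht.2]))
  refine ⟨γ, g0, fun t ht => ⟨?_, hd t ht⟩⟩
  have := Convex.norm_image_sub_le_of_norm_hasDerivWithin_le (f := γ) (f' := fun t => v (γ t))
    (s := Set.Icc (0 : ℝ) 1) (C := L) (x := 0) (y := t)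
    (fun s hs => (hd s hs).hasDerivWithinAt) (fun s hs => hb _ (by simpa using g1 s))
    (convex_Icc 0 1) (by simp) ht
  rw [show γ 0 = x from g0] at this
  refine this.trans ?_
  have : ‖t - 0‖ ≤ 1 := by rw [sub_zero, Real.norm_eq_abs, abs_of_nonneg ht.1]; exact ht.2
  calc (L : ℝ) * ‖t - 0‖ ≤ L * 1 := by gcongr
    _ = L := mul_one _

theorem exp_third : Real.exp (1 / 3) ≤ 1.4 := by
  have h := Real.exp_one_lt_d9
  have : Real.exp (1 / 3) ^ 3 = Real.exp 1 := by rw [← Real.exp_nat_mul]; norm_num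
  by_contra hc
  push Not at hc
  have : (1.4 : ℝ) ^ 3 ≤ Real.exp (1 / 3) ^ 3 := by gcongr
  norm_num at this
  linarith

theorem flow_compare {v : E → E} {x : E} {r : ℝ} {γ G G' : ℝ → E} {c : ℝ} (hc : 0 ≤ c)
    (hl : LipschitzOnWith (1 / 3) v (Metric.closedBall x r))
    (hγ : ∀ t ∈ Set.Icc (0 : ℝ) 1, ‖γ t - x‖ ≤ r ∧ HasDerivAt γ (v (γ t)) t)
    (hG : ∀ t ∈ Set.Icc (0 : ℝ) 1, ‖G t - x‖ ≤ r ∧ HasDerivAt G (G' t) t ∧ ‖G' t - v (G t)‖ ≤ c)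
    (h0 : γ 0 = G 0) : ‖γ 1 - G 1‖ ≤ 1.2 * c := by
  have hI : ∀ t ∈ Set.Ico (0 : ℝ) 1, t ∈ Set.Icc (0 : ℝ) 1 := fun t ht => ⟨ht.1, ht.2.le⟩
  have := dist_le_of_approx_trajectories_ODE_of_mem (v := fun _ => v)
    (s := fun _ => Metric.closedBall x r) (f := γ) (g := G)
    (f' := fun t => v (γ t)) (g' := G') (a := 0) (b := 1) (K := 1 / 3) (εf := 0) (εg := c) (δ := 0)
    (fun t ht => hl) (fun t ht => (hγ t ht).2.continuousAt.continuousWithinAt)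
    (fun t ht => (hγ t (hI t ht)).2.hasDerivWithinAt) (fun t ht => by simp)
    (fun t ht => by rw [mem_closedBall_iff_norm]; exact (hγ t (hI t ht)).1)
    (fun t ht => (hG t ht).2.1.continuousAt.continuousWithinAt)
    (fun t ht => (hG t (hI t ht)).2.1.hasDerivWithinAt)
    (fun t ht => by rw [dist_eq_norm]; exact (hG t (hI t ht)).2.2)
    (fun t ht => by rw [mem_closedBall_iff_norm]; exact (hG t (hI t ht)).1)
    (by simp [h0]) 1 (by simp)
  rw [dist_eq_norm] at this
  refine this.trans ?_
  have e := exp_third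
  rw [gronwallBound_of_K_ne_0 (by norm_num)]
  have e2 : ((1 / 3 : ℝ≥0) : ℝ) = 1 / 3 := by norm_num
  rw [e2]
  simp only [zero_mul, zero_add, sub_zero, mul_one]
  nlinarith
end flow
end Emb
end

section

open Filter Topology Asymptotics

namespace Emb

section fin
open scoped NNReal
variable {d : ℕ} {S : Ph d → ℂ} {D : Set (Ph d)} {ε δ : ℝ} {m : ℕ}

theorem e_lo : (2.718 : ℝ) ≤ Real.exp 1 := by linarith [Real.exp_one_gt_d9]
theorem e_hi : Real.exp 1 ≤ (2.719 : ℝ) := by linarith [Real.exp_one_lt_d9]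

theorem XH_lip (h : GS S D ε) (hm : 1 ≤ m) {x : Ph d}
    (hr : Metric.closedBall x ((3 * m + 1) * (2 * ε) + 20 * ε) ⊆ D) :
    (∀ y ∈ Metric.closedBall x (8 * ε), ‖XH (FF S D) m y‖ ≤ 4 * ε) ∧
    LipschitzOnWith (1 / 3) (XH (FF S D) m) (Metric.closedBall x (8 * ε)) := by
  have hε := h.hε
  have key : ∀ w : Ph d, ‖w - x‖ ≤ 8 * ε + 12 * ε →
      DifferentiableAt ℂ (XH (FF S D) m) w ∧ ‖XH (FF S D) m w‖ ≤ 4 * ε := by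
    intro w hw
    have hroom : Metric.closedBall w ((3 * m + 1) * (2 * ε)) ⊆ D := room_mono hr (by linarith)
    exact ⟨((fam_of_room h (by positivity) hroom).XH_analytic m).differentiableAt,
      est_size h le_rfl hroom⟩
  constructor
  · intro y hy
    rw [mem_closedBall_iff_norm] at hy
    exact (key y (by linarith)).2
  · refine LipschitzOnWith.of_dist_le_mul fun a ha b hb => ?_
    rw [mem_closedBall_iff_norm] at ha hb
    have := cauchy_lip (φ := XH (FF S D) m) (y := x) (r := 8 * ε) (ρ := 12 * ε) (M := 4 * ε)
      (by positivity) (fun w hw => (key w hw).1) (fun w hw => (key w hw).2) hb ha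
    rw [dist_eq_norm, dist_eq_norm]
    convert this using 2
    push_cast
    field_simp
    norm_num

theorem GF_hasDerivAt {F : ℂ × Ph d → Ph d} {x : Ph d} (t : ℝ) :
    HasDerivAt (fun t : ℝ => GF F x m t 1) (GF' F x m t 1) t := by
  simp only [GF, GF']
  refine HasDerivAt.fun_sum fun k _ => ?_
  have := ((bp k).hasDerivAt (t : ℂ)).comp_ofReal
  exact this.smul_const _

theorem GF_zero {F : ℂ × Ph d → Ph d} {x : Ph d} : GF F x m 0 1 = x := by
  have := GF_split (F := F) (x := x) m 0 1
  rw [Finset.sum_eq_zero, sub_eq_zero] at this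
  · exact this
  · intro k hk
    rw [bp_eval_zero, if_neg (by simp at hk; omega), zero_smul]

theorem GF_one {F : ℂ × Ph d → Ph d} {x : Ph d} (hm : 1 ≤ m) : GF F x m 1 1 = F (1, x) := by
  have := GF_split (F := F) (x := x) m 1 1
  rw [Finset.sum_eq_single 1] at this
  · have h1 := bp_eval_nat 1 1
    simp only [Nat.cast_one] at h1
    rw [h1] at this
    simpa [dl, stp] using this
  · intro k hk hk1
    have h1 := bp_eval_nat 1 k
    simp only [Nat.cast_one] at h1
    rw [h1, Nat.choose_eq_zero_of_lt (by simp at hk; omega)]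
    simp
  · intro hk; simp at hk; omega

theorem res_const (hε : 0 < ε) (hm : 1 ≤ m) :
    4 * (2 * Real.exp 1 * ε) / (2 * Real.exp 1) ^ (m + 1) / (1 - 1 / (2 * Real.exp 1)) +
    2 * (2 * Real.exp 1 * ε) / (2 * Real.exp 1) ^ (m + 1) / (1 - 1 / (2 * Real.exp 1)) ≤
    4 * (ε * Real.exp (-m)) := by
  have e1 := e_lo
  set e := Real.exp 1 with he
  have hem : Real.exp (-m) = (e ^ m)⁻¹ := by
    rw [Real.exp_neg, he, ← Real.exp_nat_mul, mul_one]
  rw [hem, pow_succ, mul_pow]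
  have h2 : (2 : ℝ) ≤ 2 ^ m := by
    calc (2 : ℝ) = 2 ^ 1 := by norm_num
      _ ≤ 2 ^ m := pow_le_pow_right₀ (by norm_num) hm
  have e0 : 0 < e := by linarith
  have h3 : (0.8 : ℝ) ≤ 1 - 1 / (2 * e) := by
    rw [le_sub_comm, div_le_iff₀ (by positivity)]; linarith
  have h4 : 0 < e ^ m := by positivity
  calc _ = 6 * (ε * (e ^ m)⁻¹) * (2 ^ m)⁻¹ * (1 - 1 / (2 * e))⁻¹ := by
        field_simp; ring_nf
    _ ≤ 6 * (ε * (e ^ m)⁻¹) * 2⁻¹ * (0.8)⁻¹ := by gcongr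
    _ ≤ _ := by have : 0 < ε * (e ^ m)⁻¹ := by positivity
                norm_num; nlinarith

theorem flow_part (h : GS S D ε) (hm : 1 ≤ m) (hδ : 6 * Real.exp 1 * ε * (m + 1) ≤ δ) {x : Ph d}
    (hr : Metric.closedBall x δ ⊆ D) :
    ∃ γ : ℝ → Ph d, γ 0 = x ∧ (∀ t ∈ Set.Icc (0 : ℝ) 1, ‖γ t - x‖ ≤ 4 * ε ∧
      HasDerivAt γ (XH (FF S D) m (γ t)) t) ∧
      ‖γ 1 - FF S D (1, x)‖ ≤ 5 * (ε * Real.exp (-m)) := by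
  have hε := h.hε
  have e1 := e_lo
  have hm' : (1 : ℝ) ≤ m := by exact_mod_cast hm
  have hδ' : 16 * ε * (m + 1) ≤ δ := by
    refine le_trans ?_ hδ
    have : 0 ≤ ε * (m + 1) := by positivity
    nlinarith
  obtain ⟨l1, l2⟩ := XH_lip h hm (x := x) (room_mono hr (by simp; nlinarith))
  obtain ⟨L, hL⟩ : ∃ L : ℝ≥0, (L : ℝ) = 4 * ε := ⟨Real.toNNReal (4 * ε), Real.coe_toNNReal _ (by positivity)⟩
  have e8 : 2 * (4 * ε) = 8 * ε := by ring
  obtain ⟨γ, g0, g1⟩ := flow_exists (v := XH (FF S D) m) (x := x) (L := L) (K := 1 / 3)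
    (by rw [hL, e8]; exact l1) (by rw [hL, e8]; exact l2)
  rw [hL] at g1
  refine ⟨γ, g0, g1, ?_⟩
  have hroom : Metric.closedBall x ((3 * m + 1) * (2 * Real.exp 1 * ε) + 2 * (2 * Real.exp 1 * ε)) ⊆ D :=
    room_mono hr (by simp; nlinarith)
  have hroom2 : Metric.closedBall x ((3 * m + 1) * ε) ⊆ D := room_mono hr (by simp; nlinarith)
  have hc := flow_compare (v := XH (FF S D) m) (x := x) (r := 8 * ε) (γ := γ)
    (G := fun t => GF (FF S D) x m t 1) (G' := fun t => GF' (FF S D) x m t 1)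
    (c := 4 * (ε * Real.exp (-m))) (by positivity) l2
    (fun t ht => ⟨(g1 t ht).1.trans (by linarith), (g1 t ht).2⟩)
    (fun t ht => ?_) (by simp [g0, GF_zero])
  · simp only [Complex.ofReal_one, GF_one hm] at hc
    refine hc.trans ?_
    have : 0 < ε * Real.exp (-m) := by positivity
    norm_num; nlinarith
  · have gb := (GF_bound h hε (μ := 1) (by simp) hroom2 ht.1 ht.2).1
    have gb : ‖GF (FF S D) x m t 1 - x‖ ≤ 2 * ε := by simpa using gb
    refine ⟨gb.trans (by linarith), GF_hasDerivAt t, ?_⟩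
    have r1 := est_residual h (R := 2 * Real.exp 1) (by linarith) hroom ht.1 ht.2
    have r2 := est_tail h (R := 2 * Real.exp 1) (m := m) (x := GF (FF S D) x m t 1) (by linarith)
      (room_mono hroom (by nlinarith))
    exact (norm_sub_le_norm_sub_add_norm_sub _ _ _).trans ((add_le_add r1 r2).trans (res_const hε hm))

theorem hamVF_HH {x : Ph d} (h : Fam (FF S D) (AF S D) x) :
    hamVF d (HH (FF S D) (AF S D) m) x = XH (FF S D) m x := by
  refine Prod.ext ?_ ?_
  · funext i
    simp only [hamVF, qGrad, Pi.neg_apply]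
    rw [h.HH_fderiv]
    simp [Pi.single_apply]
  · funext i
    simp only [hamVF, pGrad]
    rw [h.HH_fderiv]
    simp [Pi.single_apply]

theorem finDiff_eq {f : Ph d → Ph d} {D₀ : Set (Ph d)} (k : ℕ) : ∀ r : ℝ, ∀ x : Ph d,
    (∀ y ∈ Metric.cthickening (r + k * ε) D₀, FF S D (1, y) = f y ∧ ‖f y - y‖ ≤ ε) →
    0 ≤ ε → 0 ≤ r → x ∈ Metric.cthickening r D₀ → dl (FF S D) Prod.snd k (1, x) = finDiff f k x := by
  induction k with
  | zero => intro r x _ _ _ _; rfl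
  | succ k ih =>
    intro r x hf hε hr hx
    have hk : (0 : ℝ) ≤ k := Nat.cast_nonneg k
    have hx' := hf x (Metric.cthickening_mono (by push_cast; nlinarith) _ hx)
    have hfx : f x ∈ Metric.cthickening (r + ε) D₀ := by
      rw [Metric.mem_cthickening_iff] at hx ⊢
      refine (Metric.infEDist_le_infEDist_add_edist (y := x)).trans ?_
      rw [ENNReal.ofReal_add hr hε]
      refine add_le_add hx ?_
      rw [edist_dist, dist_eq_norm]
      exact ENNReal.ofReal_le_ofReal hx'.2
    have h1 := ih (r + ε) (f x) (by
      convert hf using 3; push_cast; ring) hε (by positivity) hfx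
    have h2 := ih r x (fun y hy => hf y (Metric.cthickening_mono (by push_cast; nlinarith) _ hy)) hε hr hx
    simp only [dl, stp, finDiff, hx'.1, h1, h2]

theorem ball_thick {D₀ : Set (Ph d)} {a b : ℝ} (ha : 0 ≤ a) (hb : 0 ≤ b) {x : Ph d}
    (hx : x ∈ Metric.cthickening a D₀) : Metric.closedBall x b ⊆ Metric.cthickening (a + b) D₀ := by
  intro y hy
  rw [Metric.mem_cthickening_iff] at hx ⊢
  refine (Metric.infEDist_le_infEDist_add_edist (y := x)).trans ?_
  rw [ENNReal.ofReal_add ha hb]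
  refine add_le_add hx ?_
  rw [edist_dist]
  exact ENNReal.ofReal_le_ofReal hy

end fin
end Emb
end

/-- **Embedding theorem, Hamiltonian part.**
In the setting of the embedding theorem (`|∇S| ≤ ε` on `D`, `f` generated by
`P·q + S(P,q)`, `m = ⌊δ/(6eε) − d⌋ ≥ 1`), there is a Hamiltonian vector field
`X̂_m = J∇H_m` with `H_m` analytic on `D₁`, such that
`‖X̂_m − X_m‖_{D₁} ≤ 4 e^{d+1} ε exp(−δ/(6eε))`,
`‖Φ_{X̂_m} − f‖_{D₀} ≤ 5 e^{d+1} ε exp(−δ/(6eε))`, `‖X̂_m‖_{D₁} ≤ 4ε`, and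
`‖X̂_m − J∇S‖_{D₁} ≤ 17(d+3)² ε²/δ`. -/
theorem embedding_hamiltonian_vector_field (d : ℕ) (hd : 1 ≤ d)
    (D₀ : Set (CPhase d)) (δ ε : ℝ) (hδ : 0 < δ) (hε : 0 < ε)
    (D D₁ : Set (CPhase d))
    (hD : D = Metric.cthickening δ D₀)
    (hD₁ : D₁ = Metric.cthickening (δ / 2) D₀)
    (S : CPhase d → ℂ) (hS : AnalyticOnNhd ℂ S D)
    (hεub : ∀ x ∈ D, max ‖pGrad d S x‖ ‖qGrad d S x‖ ≤ ε)
    (f : CPhase d → CPhase d)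
    (hfa : AnalyticOnNhd ℂ f (Metric.thickening (3 * δ / 4) D₀))
    (hf : ∀ x ∈ Metric.thickening (3 * δ / 4) D₀,
      ((f x).1, x.2) ∈ D ∧
      x.1 = (f x).1 + qGrad d S ((f x).1, x.2) ∧
      (f x).2 = x.2 + pGrad d S ((f x).1, x.2))
    (m : ℕ) (hm : 1 ≤ m)
    (hmdef : (m : ℤ) = ⌊δ / (6 * Real.exp 1 * ε) - d⌋) :
    ∃ H : CPhase d → ℂ, AnalyticOnNhd ℂ H D₁ ∧
      (∀ x ∈ D₁, ‖hamVF d H x - interpVF d f m x‖ ≤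
        4 * Real.exp ((d : ℝ) + 1) * ε * Real.exp (-δ / (6 * Real.exp 1 * ε))) ∧
      (∃ Φ : CPhase d → CPhase d,
        (∀ x ∈ D₀, ∃ γ : ℝ → CPhase d, γ 0 = x ∧ γ 1 = Φ x ∧
          ∀ t ∈ Set.Icc (0 : ℝ) 1, γ t ∈ D₁ ∧ HasDerivAt γ (hamVF d H (γ t)) t) ∧
        ∀ x ∈ D₀, ‖Φ x - f x‖ ≤
          5 * Real.exp ((d : ℝ) + 1) * ε * Real.exp (-δ / (6 * Real.exp 1 * ε))) ∧
      (∀ x ∈ D₁, ‖hamVF d H x‖ ≤ 4 * ε) ∧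
      (∀ x ∈ D₁, ‖hamVF d H x - hamVF d S x‖ ≤ 17 * ((d : ℝ) + 3) ^ 2 * ε ^ 2 / δ) := by
  have hM0 : 0 < 6 * Real.exp 1 * ε := by positivity
  have e1 := Emb.e_lo
  set M := δ / (6 * Real.exp 1 * ε) with hM
  have hMδ : 6 * Real.exp 1 * ε * M = δ := by rw [hM]; field_simp
  have hfl := Int.floor_eq_iff.1 hmdef.symm
  have hd' : (1 : ℝ) ≤ d := by exact_mod_cast hd
  have hm' : (1 : ℝ) ≤ m := by exact_mod_cast hm
  have hl : (m : ℝ) + d ≤ M := by have := hfl.1; push_cast at this; linarith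
  have hu : M < m + 1 + d := by have := hfl.2; push_cast at this; linarith
  have hroom : 6 * Real.exp 1 * ε * (m + 1) ≤ δ := by
    rw [← hMδ]; gcongr; linarith
  have hδ' : 16 * ε * (m + 1) ≤ δ := by
    refine le_trans ?_ hroom
    have : 0 ≤ ε * (m + 1) := by positivity
    nlinarith
  have hexp : Real.exp (-m) ≤ Real.exp ((d : ℝ) + 1) * Real.exp (-δ / (6 * Real.exp 1 * ε)) := by
    rw [← Real.exp_add, neg_div, ← hM]
    exact Real.exp_le_exp.2 (by linarith)
  have hexp1 : ∀ c : ℝ, 0 ≤ c → c * (ε * Real.exp (-m)) ≤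
      c * Real.exp ((d : ℝ) + 1) * ε * Real.exp (-δ / (6 * Real.exp 1 * ε)) := by
    intro c hc
    calc c * (ε * Real.exp (-m)) ≤
        c * (ε * (Real.exp ((d : ℝ) + 1) * Real.exp (-δ / (6 * Real.exp 1 * ε)))) := by gcongr
      _ = _ := by ring
  have h : Emb.GS S D ε := ⟨hS, hε, fun x hx => (le_max_left _ _).trans (hεub x hx),
    fun x hx => (le_max_right _ _).trans (hεub x hx)⟩
  have hb1 : ∀ x ∈ D₁, Metric.closedBall x (δ / 2) ⊆ D := by
    intro x hx
    rw [hD₁] at hx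
    have := Emb.ball_thick (by positivity : 0 ≤ δ / 2) (by positivity : 0 ≤ δ / 2) hx
    rwa [add_halves, ← hD] at this
  have hfam : ∀ x ∈ D₁, Emb.Fam (Emb.FF S D) (Emb.AF S D) x := fun x hx =>
    Emb.fam_of_room h (by positivity) (hb1 x hx)
  have hroom1 : ∀ x ∈ D₁, Metric.closedBall x ((3 * m + 1) * (Real.exp 1 * ε)) ⊆ D := fun x hx =>
    Emb.room_mono (hb1 x hx) (by
      have : 0 ≤ Real.exp 1 * ε := by positivity
      simp; nlinarith)
  have hbase : ∀ y ∈ Metric.thickening (3 * δ / 4) D₀, Emb.FF S D (1, y) = f y ∧ ‖f y - y‖ ≤ ε := by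
    intro y hy
    have hy' : Metric.closedBall y (3 * ε) ⊆ D := by
      have := Emb.ball_thick (by positivity : 0 ≤ 3 * δ / 4) (by positivity : 0 ≤ δ / 4)
        (Metric.thickening_subset_cthickening _ _ hy)
      rw [show 3 * δ / 4 + δ / 4 = δ by ring, ← hD] at this
      exact Emb.room_mono this (by simp; nlinarith)
    have e := Emb.FF_eq h hε hy' le_rfl (hf y hy).1 (hf y hy).2.1 (hf y hy).2.2
    refine ⟨e, ?_⟩
    have := Emb.FF_near h (p := (1, y)) hε hy' (by simp)
    rw [e] at this
    simpa using this
  have hinterp : ∀ x ∈ D₁, interpVF d f m x = Emb.XF (Emb.FF S D) m (1, x) := by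
    intro x hx
    rw [hD₁] at hx
    refine Finset.sum_congr rfl fun k hk => ?_
    have hk : (k : ℝ) ≤ m := by exact_mod_cast (Finset.mem_Icc.1 hk).2
    congr 1
    refine (Emb.finDiff_eq k (δ / 2) x (fun y hy => hbase y ?_) hε.le (by positivity) hx).symm
    exact Metric.cthickening_subset_thickening' (by positivity) (by nlinarith) _ hy
  have hham : ∀ x ∈ D₁, hamVF d (Emb.HH (Emb.FF S D) (Emb.AF S D) m) x = Emb.XH (Emb.FF S D) m x :=
    fun x hx => Emb.hamVF_HH (hfam x hx)
  have hflow : ∀ x ∈ D₀, ∃ γ : ℝ → CPhase d, γ 0 = x ∧ (∀ t ∈ Set.Icc (0 : ℝ) 1, ‖γ t - x‖ ≤ 4 * ε ∧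
      HasDerivAt γ (Emb.XH (Emb.FF S D) m (γ t)) t) ∧
      ‖γ 1 - Emb.FF S D (1, x)‖ ≤ 5 * (ε * Real.exp (-m)) := by
    intro x hx
    refine Emb.flow_part h hm hroom ?_
    rw [hD]
    exact Metric.closedBall_subset_cthickening hx δ
  refine ⟨Emb.HH (Emb.FF S D) (Emb.AF S D) m, fun x hx => (hfam x hx).HH_analytic m, ?_, ?_, ?_, ?_⟩
  · intro x hx
    rw [hham x hx, hinterp x hx, norm_sub_rev]
    refine (Emb.est_tail h (by linarith) (hroom1 x hx)).trans (le_trans ?_ (hexp1 4 (by norm_num)))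
    have hem : Real.exp (-m) = (Real.exp 1 ^ m)⁻¹ := by
      rw [Real.exp_neg, ← Real.exp_nat_mul, mul_one]
    have h3 : (1 / 2 : ℝ) ≤ 1 - 1 / Real.exp 1 := by
      rw [le_sub_comm, div_le_iff₀ (by positivity)]; linarith
    rw [hem]
    calc _ = 2 * (ε * (Real.exp 1 ^ m)⁻¹) * (1 - 1 / Real.exp 1)⁻¹ := by
          rw [pow_succ, div_eq_mul_inv _ (1 - 1 / Real.exp 1)]
          congr 1
          field_simp
      _ ≤ 2 * (ε * (Real.exp 1 ^ m)⁻¹) * (1 / 2)⁻¹ := by gcongr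
      _ = _ := by norm_num; ring
  · classical
    choose! γ hγ0 hγ1 hγ2 using hflow
    refine ⟨fun x => γ x 1, fun x hx => ⟨γ x, hγ0 x hx, rfl, fun t ht => ?_⟩, fun x hx => ?_⟩
    · have hmem : γ x t ∈ D₁ := by
        rw [hD₁]
        refine Metric.closedBall_subset_cthickening hx _ ?_
        rw [mem_closedBall_iff_norm]
        exact (hγ1 x hx t ht).1.trans (by nlinarith)
      refine ⟨hmem, ?_⟩
      rw [hham _ hmem]
      exact (hγ1 x hx t ht).2
    · have hx' : x ∈ Metric.thickening (3 * δ / 4) D₀ := Metric.self_subset_thickening (by positivity) _ hx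
      have := hγ2 x hx
      rw [(hbase x hx').1] at this
      exact this.trans (hexp1 5 (by norm_num))
  · intro x hx
    rw [hham x hx]
    exact Emb.est_size h (by linarith) (hroom1 x hx)
  · intro x hx
    rw [hham x hx]
    refine (Emb.est_ham h (by positivity : 0 < δ / 2) (hb1 x hx) hm (by nlinarith)).trans ?_
    rw [div_div_eq_mul_div]
    rw [div_le_div_iff_of_pos_right hδ]
    have : 0 < ε ^ 2 := by positivity
    have : (16 : ℝ) ≤ ((d : ℝ) + 3) ^ 2 := by nlinarith
    nlinarith
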